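/- Let k be a field, let Q be a connected finite acyclic non-Dynkin quiver with r vertices, let C be the adjacency matrix of the double quiver of Q, and let v = (v_i)_{i∈Q_0} ∈ k^{Q_0} be an arbitrary element. Then the quiver Heisenberg algebra ᵛΛ(Q), graded with all arrows of the double quiver in degree 1 and the central variable z in degree 2, has finite dimensional graded pieces and its matrix Hilbert series satisfies h_{ᵛΛ}(t)·(1 − Ct + t²·1)·(1 − t²) = 1 in the ring of r×r matrices over k[[t]]; equivalently h_{ᵛΛ}(t) = 1/((1 − Ct + t²)(1 − t²)). -/

import Mathlib

/-!
STATEMENT 6: Hilbert series of the quiver Heisenberg algebra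
`ᵛΛ(Q) = k[z]Q̄ / (ρ_i - v_i z e_i)` of a connected finite acyclic non-Dynkin
quiver: the graded pieces are finite dimensional and
`h_{ᵛΛ}(t) · (1 - C t + t²) · (1 - t²) = 1` over `k[[t]]`.

The algebra is presented as the quotient of the free algebra on generators
`e_i` (trivial paths, degree 0), `α`, `α*` (arrows of the double quiver,
degree 1) and a central variable `z` (degree 2) by the path-algebra
relations, the relations making `z` central, and the relations
`ρ_i = v_i z e_i`.
-/

/-- A finite quiver. -/
structure FinQuiver where
  r : ℕ
  Arrow : Type
  [instFintypeArrow : Fintype Arrow]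
  src : Arrow → Fin r
  tgt : Arrow → Fin r

attribute [instance] FinQuiver.instFintypeArrow

namespace FinQuiver

variable (Q : FinQuiver)

/-- The underlying graph of `Q` is connected. -/
def Connected : Prop :=
  ∀ i j : Fin Q.r, Relation.ReflTransGen
    (fun a b => ∃ e : Q.Arrow, (Q.src e = a ∧ Q.tgt e = b) ∨ (Q.src e = b ∧ Q.tgt e = a)) i j

/-- `Q` has no oriented cycles. -/
def Acyclic : Prop :=
  ∀ i : Fin Q.r, ¬ Relation.TransGen (fun a b => ∃ e : Q.Arrow, Q.src e = a ∧ Q.tgt e = b) i i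

/-- The Tits quadratic form of `Q` on `ℝ^{Q₀}`. -/
def titsForm (x : Fin Q.r → ℝ) : ℝ :=
  (∑ i, x i ^ 2) - ∑ e : Q.Arrow, x (Q.src e) * x (Q.tgt e)

/-- `Q` is Dynkin iff its Tits form is positive definite. -/
def IsDynkin : Prop := ∀ x : Fin Q.r → ℝ, x ≠ 0 → 0 < Q.titsForm x

/-- Adjacency matrix of `Q`. -/
def adjMatrix : Matrix (Fin Q.r) (Fin Q.r) ℕ := Matrix.of fun i j =>
  Fintype.card {e : Q.Arrow // Q.src e = i ∧ Q.tgt e = j}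

/-- Adjacency matrix `C` of the double quiver `Q̄`. -/
def doubleAdj : Matrix (Fin Q.r) (Fin Q.r) ℕ := Matrix.of fun i j =>
  Q.adjMatrix i j + Q.adjMatrix j i

end FinQuiver

/-- Generators for `k[z]Q̄`: trivial paths, arrows of the double quiver, and
the central variable `z`. -/
inductive QHGen (Q : FinQuiver) : Type
  | vert : Fin Q.r → QHGen Q
  | fwd : Q.Arrow → QHGen Q
  | bwd : Q.Arrow → QHGen Q
  | z : QHGen Q

/-- The mesh element `ρ_i = ∑_{src α = i} α α* - ∑_{tgt α = i} α* α`. -/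
noncomputable def qhMesh (k : Type) [Field k] (Q : FinQuiver) (i : Fin Q.r) :
    FreeAlgebra k (QHGen Q) :=
  (∑ e : Q.Arrow, if Q.src e = i then
      FreeAlgebra.ι k (QHGen.fwd e) * FreeAlgebra.ι k (QHGen.bwd e) else 0)
  - ∑ e : Q.Arrow, if Q.tgt e = i then
      FreeAlgebra.ι k (QHGen.bwd e) * FreeAlgebra.ι k (QHGen.fwd e) else 0

/-- Defining relations of the quiver Heisenberg algebra `ᵛΛ(Q)`:
path-algebra relations for `Q̄`, centrality of `z`, and `ρ_i = v_i z e_i`. -/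
inductive QHRel (k : Type) [Field k] (Q : FinQuiver) (v : Fin Q.r → k) :
    FreeAlgebra k (QHGen Q) → FreeAlgebra k (QHGen Q) → Prop
  | vert_idem (i : Fin Q.r) :
      QHRel k Q v (FreeAlgebra.ι k (QHGen.vert i) * FreeAlgebra.ι k (QHGen.vert i))
        (FreeAlgebra.ι k (QHGen.vert i))
  | vert_orth (i j : Fin Q.r) (h : i ≠ j) :
      QHRel k Q v (FreeAlgebra.ι k (QHGen.vert i) * FreeAlgebra.ι k (QHGen.vert j)) 0
  | vert_sum : QHRel k Q v (∑ i : Fin Q.r, FreeAlgebra.ι k (QHGen.vert i)) 1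
  | fwd_left (e : Q.Arrow) :
      QHRel k Q v (FreeAlgebra.ι k (QHGen.vert (Q.src e)) * FreeAlgebra.ι k (QHGen.fwd e))
        (FreeAlgebra.ι k (QHGen.fwd e))
  | fwd_right (e : Q.Arrow) :
      QHRel k Q v (FreeAlgebra.ι k (QHGen.fwd e) * FreeAlgebra.ι k (QHGen.vert (Q.tgt e)))
        (FreeAlgebra.ι k (QHGen.fwd e))
  | bwd_left (e : Q.Arrow) :
      QHRel k Q v (FreeAlgebra.ι k (QHGen.vert (Q.tgt e)) * FreeAlgebra.ι k (QHGen.bwd e))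
        (FreeAlgebra.ι k (QHGen.bwd e))
  | bwd_right (e : Q.Arrow) :
      QHRel k Q v (FreeAlgebra.ι k (QHGen.bwd e) * FreeAlgebra.ι k (QHGen.vert (Q.src e)))
        (FreeAlgebra.ι k (QHGen.bwd e))
  | central (g : QHGen Q) :
      QHRel k Q v (FreeAlgebra.ι k QHGen.z * FreeAlgebra.ι k g)
        (FreeAlgebra.ι k g * FreeAlgebra.ι k QHGen.z)
  | heisenberg (i : Fin Q.r) :
      QHRel k Q v (qhMesh k Q i)
        (v i • (FreeAlgebra.ι k QHGen.z * FreeAlgebra.ι k (QHGen.vert i)))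

/-- The quiver Heisenberg algebra `ᵛΛ(Q)`. -/
abbrev QHAlg (k : Type) [Field k] (Q : FinQuiver) (v : Fin Q.r → k) : Type :=
  RingQuot (QHRel k Q v)

/-- Image in `ᵛΛ(Q)` of a generator. -/
noncomputable def qhGen (k : Type) [Field k] (Q : FinQuiver) (v : Fin Q.r → k)
    (g : QHGen Q) : QHAlg k Q v :=
  RingQuot.mkAlgHom k (QHRel k Q v) (FreeAlgebra.ι k g)

/-- Degree of a generator: trivial paths 0, arrows 1, `z` 2. -/
def qhWt (Q : FinQuiver) : QHGen Q → ℕ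
  | .vert _ => 0
  | .fwd _ => 1
  | .bwd _ => 1
  | .z => 2

/-- The degree-`n` component `ᵛΛ(Q)_n`: span of images of weight-`n` monomials. -/
noncomputable def qhPiece (k : Type) [Field k] (Q : FinQuiver) (v : Fin Q.r → k)
    (n : ℕ) : Submodule k (QHAlg k Q v) :=
  Submodule.span k
    {x | ∃ l : List (QHGen Q), (l.map (qhWt Q)).sum = n ∧ x = (l.map (qhGen k Q v)).prod}

/-- The subspace `e_i ᵛΛ(Q)_n e_j`. -/
noncomputable def qhCorner (k : Type) [Field k] (Q : FinQuiver) (v : Fin Q.r → k)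
    (n : ℕ) (i j : Fin Q.r) : Submodule k (QHAlg k Q v) :=
  (qhPiece k Q v n).map
    ((LinearMap.mulLeft k (qhGen k Q v (QHGen.vert i))).comp
      (LinearMap.mulRight k (qhGen k Q v (QHGen.vert j))))

/-- The matrix Hilbert series `h_{ᵛΛ}(t)` over `k[[t]]`. -/
noncomputable def qhHilb (k : Type) [Field k] (Q : FinQuiver) (v : Fin Q.r → k) :
    Matrix (Fin Q.r) (Fin Q.r) (PowerSeries k) :=
  Matrix.of fun i j => PowerSeries.mk fun n => (Module.finrank k (qhCorner k Q v n i j) : k)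

namespace FinQuiver

variable (Q : FinQuiver)

/-- The arrows of the double quiver. -/
abbrev DArrow : Type := Q.Arrow ⊕ Q.Arrow

variable {Q}

/-- Source of an arrow of the double quiver. -/
def dsrc : Q.DArrow → Fin Q.r := Sum.elim Q.src Q.tgt

/-- Target of an arrow of the double quiver. -/
def dtgt : Q.DArrow → Fin Q.r := Sum.elim Q.tgt Q.src

/-- The sign with which `a a*` occurs in the mesh relation. -/
def dsign (k : Type) [Field k] : Q.DArrow → k := Sum.elim (fun _ => 1) (fun _ => -1)

lemma dsrc_swap (a : Q.DArrow) : dsrc a.swap = dtgt a := by cases a <;> rfl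

lemma dtgt_swap (a : Q.DArrow) : dtgt a.swap = dsrc a := by cases a <;> rfl

lemma dsign_mul_self (k : Type) [Field k] (a : Q.DArrow) : dsign k a * dsign k a = 1 := by
  cases a <;> simp [dsign]

lemma sum_dsrc_eq {M : Type*} [AddCommMonoid M] (i : Fin Q.r) (f : Q.DArrow → M) :
    ∑ a : {a : Q.DArrow // dsrc a = i}, f a.1
      = (∑ e : Q.Arrow, if Q.src e = i then f (Sum.inl e) else 0)
        + ∑ e : Q.Arrow, if Q.tgt e = i then f (Sum.inr e) else 0 := by
  have h : ∑ a : {a : Q.DArrow // dsrc a = i}, f a.1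
      = ∑ a : Q.DArrow, if dsrc a = i then f a else 0 := by
    rw [← Finset.sum_filter]
    exact (Finset.sum_subtype _ (by simp) f).symm
  rw [h, Fintype.sum_sum_type]
  rfl

lemma sum_doubleAdj_mul {R : Type*} [CommSemiring R] (i : Fin Q.r) (f : Fin Q.r → R) :
    ∑ l, (Q.doubleAdj i l : R) * f l = ∑ a : {a : Q.DArrow // dsrc a = i}, f (dtgt a.1) := by
  have h1 : ∀ l, (Q.doubleAdj i l : R) * f l
      = (∑ e : Q.Arrow, if Q.src e = i ∧ Q.tgt e = l then f l else 0)
        + ∑ e : Q.Arrow, if Q.tgt e = i ∧ Q.src e = l then f l else 0 := by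
    intro l
    simp only [doubleAdj, adjMatrix, Matrix.of_apply, Fintype.card_subtype, Nat.cast_add,
      Finset.sum_ite, Finset.sum_const, nsmul_eq_mul, add_mul, smul_zero, add_zero,
      and_comm (a := Q.src _ = l)]
  rw [sum_dsrc_eq i fun a => f (dtgt a)]
  simp only [h1, Finset.sum_add_distrib]
  congr 1 <;> rw [Finset.sum_comm] <;> refine Finset.sum_congr rfl fun e _ => ?_ <;>
    simp [ite_and, dtgt]

/-- A nonnegative vector which is strictly superharmonic for the Tits form exists only on Dynkin
quivers. -/
theorem isDynkin_of_superharmonic (hconn : Q.Connected) (w : Fin Q.r → ℝ) (hw : ∀ i, 0 ≤ w i)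
    (j : Fin Q.r)
    (h : ∀ i, ∑ a : {a : Q.DArrow // dsrc a = i}, w (dtgt a.1) + (if i = j then 1 else 0)
      ≤ 2 * w i) : Q.IsDynkin := by
  have hsum : ∀ i, 0 ≤ ∑ a : {a : Q.DArrow // dsrc a = i}, w (dtgt a.1) := fun i =>
    Finset.sum_nonneg fun a _ => hw _
  have hle : ∀ a : Q.DArrow, w (dtgt a) ≤ 2 * w (dsrc a) := by
    intro a
    have h1 := Finset.single_le_sum (f := fun b : {b : Q.DArrow // dsrc b = dsrc a} =>
      w (dtgt b.1)) (fun b _ => hw _) (Finset.mem_univ ⟨a, rfl⟩)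
    have h2 := h (dsrc a)
    have h3 : (0 : ℝ) ≤ if dsrc a = j then 1 else 0 := by split_ifs <;> norm_num
    dsimp only at h1
    linarith
  have hadj : ∀ {a b : Fin Q.r}, (∃ e : Q.Arrow, (Q.src e = a ∧ Q.tgt e = b) ∨
      (Q.src e = b ∧ Q.tgt e = a)) → w a ≤ 2 * w b := by
    rintro a b ⟨e, ⟨rfl, rfl⟩ | ⟨rfl, rfl⟩⟩
    · exact hle (Sum.inr e)
    · exact hle (Sum.inl e)
  have hwj : 0 < w j := by
    have h1 := h j
    have h2 := hsum j
    simp only [if_true] at h1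
    linarith
  have hpos : ∀ i, 0 < w i := by
    intro i
    induction hconn j i with
    | refl => exact hwj
    | tail _ hbc ih => linarith [hadj hbc]
  intro x hx
  by_contra hq
  rw [not_lt] at hq
  have hedge : ∑ e : Q.Arrow, (w (Q.src e) * w (Q.tgt e) *
        (x (Q.src e) / w (Q.src e) - x (Q.tgt e) / w (Q.tgt e)) ^ 2
        + 2 * (x (Q.src e) * x (Q.tgt e)))
      = ∑ i, x i ^ 2 / w i * ∑ a : {a : Q.DArrow // dsrc a = i}, w (dtgt a.1) := by
    have : ∀ i, x i ^ 2 / w i * ∑ a : {a : Q.DArrow // dsrc a = i}, w (dtgt a.1)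
        = ∑ e : Q.Arrow, ((if Q.src e = i then x i ^ 2 / w i * w (Q.tgt e) else 0)
          + if Q.tgt e = i then x i ^ 2 / w i * w (Q.src e) else 0) := by
      intro i
      rw [sum_dsrc_eq i fun a => w (dtgt a), Finset.sum_add_distrib, mul_add, Finset.mul_sum,
        Finset.mul_sum]
      simp [dtgt]
    simp only [this]
    rw [Finset.sum_comm]
    refine Finset.sum_congr rfl fun e _ => ?_
    rw [Finset.sum_add_distrib]
    simp only [Finset.sum_ite_eq, Finset.mem_univ, if_true]
    have h1 := (hpos (Q.src e)).ne'
    have h2 := (hpos (Q.tgt e)).ne'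
    field_simp
    ring
  have hbound : ∑ i, x i ^ 2 / w i * ∑ a : {a : Q.DArrow // dsrc a = i}, w (dtgt a.1)
      ≤ 2 * ∑ i, x i ^ 2 - x j ^ 2 / w j := by
    have : 2 * ∑ i, x i ^ 2 - x j ^ 2 / w j
        = ∑ i, x i ^ 2 / w i * (2 * w i - if i = j then 1 else 0) := by
      simp only [mul_sub, Finset.sum_sub_distrib, mul_ite, mul_one, mul_zero,
        Finset.sum_ite_eq', Finset.mem_univ, if_true, Finset.mul_sum]
      congr 1
      refine Finset.sum_congr rfl fun i _ => ?_
      have := (hpos i).ne'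
      field_simp
    rw [this]
    refine Finset.sum_le_sum fun i _ => ?_
    refine mul_le_mul_of_nonneg_left ?_ (div_nonneg (sq_nonneg _) (hw i))
    linarith [h i]
  rw [Finset.sum_add_distrib, ← Finset.mul_sum] at hedge
  unfold titsForm at hq
  have hterm : ∀ e : Q.Arrow, 0 ≤ w (Q.src e) * w (Q.tgt e) *
      (x (Q.src e) / w (Q.src e) - x (Q.tgt e) / w (Q.tgt e)) ^ 2 := fun e =>
    mul_nonneg (mul_nonneg (hw _) (hw _)) (sq_nonneg _)
  have hS := Finset.sum_nonneg fun e (_ : e ∈ Finset.univ) => hterm e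
  have hJ : 0 ≤ x j ^ 2 / w j := div_nonneg (sq_nonneg _) (hw j)
  have hS0 := le_antisymm (by linarith) hS
  have hJ0 : x j ^ 2 / w j = 0 := le_antisymm (by linarith) hJ
  rw [Finset.sum_eq_zero_iff_of_nonneg fun e _ => hterm e] at hS0
  have hxj : x j = 0 := by
    rcases div_eq_zero_iff.mp hJ0 with h0 | h0
    · exact pow_eq_zero_iff (two_ne_zero) |>.mp h0
    · exact absurd h0 hwj.ne'
  have heq : ∀ e : Q.Arrow, x (Q.src e) / w (Q.src e) = x (Q.tgt e) / w (Q.tgt e) := by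
    intro e
    have h0 := hS0 e (Finset.mem_univ e)
    have h1 := (mul_pos (hpos (Q.src e)) (hpos (Q.tgt e))).ne'
    have h2 := (mul_eq_zero.mp h0).resolve_left h1
    exact sub_eq_zero.mp (pow_eq_zero_iff (two_ne_zero) |>.mp h2)
  have hall : ∀ i, x i / w i = 0 := by
    intro i
    induction hconn j i with
    | refl => rw [hxj, zero_div]
    | tail _ hbc ih =>
      obtain ⟨e, ⟨rfl, rfl⟩ | ⟨rfl, rfl⟩⟩ := hbc
      · rw [← heq e, ih]
      · rw [heq e, ih]
  refine hx (funext fun i => ?_)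
  exact (div_eq_zero_iff.mp (hall i)).resolve_right (hpos i).ne'

end FinQuiver

section

open FinQuiver Module

section Exactness

variable {k V₀ V₁ V₂ V₃ : Type*} [Field k] [AddCommGroup V₀] [AddCommGroup V₁] [AddCommGroup V₂]
  [AddCommGroup V₃] [Module k V₀] [Module k V₁] [Module k V₂] [Module k V₃]
  [FiniteDimensional k V₁]

lemma finrank_add_finrank_le_of_exact [FiniteDimensional k V₀] [FiniteDimensional k V₂]
    (d₁ : V₁ →ₗ[k] V₀) (d₂ : V₂ →ₗ[k] V₁) (d₃ : V₃ →ₗ[k] V₂)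
    (h₁ : LinearMap.ker d₁ ≤ LinearMap.range d₂) (h₂ : d₂ ∘ₗ d₃ = 0)
    (h₃ : Function.Injective d₃) :
    finrank k V₁ + finrank k V₃ ≤ finrank k V₀ + finrank k V₂ := by
  have e₁ := d₁.finrank_range_add_finrank_ker
  have e₂ := d₂.finrank_range_add_finrank_ker
  have i₁ := Submodule.finrank_mono h₁
  have i₀ := (LinearMap.range d₁).finrank_le
  have i₂ := Submodule.finrank_mono (LinearMap.range_le_ker_iff.mpr h₂)
  rw [LinearMap.finrank_range_of_inj h₃] at i₂
  omega

lemma finrank_eq_of_shortExact (d₁ : V₁ →ₗ[k] V₀) (d₂ : V₂ →ₗ[k] V₁)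
    (h₀ : Function.Surjective d₁) (h₁ : LinearMap.ker d₁ = LinearMap.range d₂)
    (h₂ : Function.Injective d₂) :
    finrank k V₁ = finrank k V₀ + finrank k V₂ := by
  have e₁ := d₁.finrank_range_add_finrank_ker
  rw [h₁, LinearMap.finrank_range_of_inj h₂, LinearMap.range_eq_top.mpr h₀, finrank_top] at e₁
  exact e₁.symm

end Exactness

/-- A `ℤ`-graded `k`-algebra `B` receiving the arrows of the double quiver of `Q`; the grading is
recorded by its homogeneous projections `pr`. -/
structure QuiverGrading (k : Type) [Field k] (Q : FinQuiver) (B : Type) [Ring B]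
    [Algebra k B] where
  e : Fin Q.r → B
  ar : Q.DArrow → B
  pr : ℤ → B →ₗ[k] B
  e_mul_self : ∀ i, e i * e i = e i
  e_mul_e : ∀ i j, i ≠ j → e i * e j = 0
  sum_e : ∑ i, e i = 1
  e_mul_ar : ∀ a, e (dsrc a) * ar a = ar a
  ar_mul_e : ∀ a, ar a * e (dtgt a) = ar a
  pr_pr : ∀ n x, pr n (pr n x) = pr n x
  pr_of_neg : ∀ n, n < 0 → pr n = 0
  pr_e : ∀ n i, pr n (e i) = if n = 0 then e i else 0
  pr_e_mul : ∀ n i x, pr n (e i * x) = e i * pr n x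
  pr_mul_e : ∀ n x i, pr n (x * e i) = pr n x * e i
  pr_ar_mul : ∀ n a x, pr n (ar a * x) = ar a * pr (n - 1) x

namespace QuiverGrading

variable {k : Type} [Field k] {Q : FinQuiver} {B : Type} [Ring B] [Algebra k B]
  (G : QuiverGrading k Q B)

/-- The subspace `e_i B_n e_j`. -/
def corner (n : ℤ) (i j : Fin Q.r) : Submodule k B where
  carrier := {x | G.pr n x = x ∧ G.e i * x = x ∧ x * G.e j = x}
  add_mem' := by
    rintro x y ⟨h1, h2, h3⟩ ⟨h4, h5, h6⟩
    exact ⟨by rw [map_add, h1, h4], by rw [mul_add, h2, h5], by rw [add_mul, h3, h6]⟩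
  zero_mem' := by simp
  smul_mem' := by
    rintro c x ⟨h1, h2, h3⟩
    exact ⟨by rw [map_smul, h1], by rw [mul_smul_comm, h2], by rw [smul_mul_assoc, h3]⟩

variable {G}

lemma pr_mem_corner (n : ℤ) (i j : Fin Q.r) (x : B) :
    G.e i * G.pr n x * G.e j ∈ G.corner n i j := by
  refine ⟨?_, ?_, ?_⟩
  · rw [G.pr_mul_e, G.pr_e_mul, G.pr_pr]
  · rw [← mul_assoc, ← mul_assoc, G.e_mul_self]
  · rw [mul_assoc _ (G.e j), G.e_mul_self]

lemma e_mul_of_ne {n : ℤ} {i j l : Fin Q.r} {x : B} (hx : x ∈ G.corner n i j) (h : l ≠ i) :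
    G.e l * x = 0 := by
  rw [← hx.2.1, ← mul_assoc, G.e_mul_e l i h, zero_mul]

lemma ar_mul_mem {n : ℤ} {j : Fin Q.r} {a : Q.DArrow} {x : B}
    (hx : x ∈ G.corner (n - 1) (dtgt a) j) : G.ar a * x ∈ G.corner n (dsrc a) j := by
  refine ⟨by rw [G.pr_ar_mul, hx.1], by rw [← mul_assoc, G.e_mul_ar], ?_⟩
  rw [mul_assoc, hx.2.2]

lemma ar_swap_mul_mem {n : ℤ} {i j : Fin Q.r} {a : Q.DArrow} (ha : dsrc a = i) {x : B}
    (hx : x ∈ G.corner (n - 2) i j) : G.ar a.swap * x ∈ G.corner (n - 1) (dtgt a) j := by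
  rw [← ha, ← dtgt_swap, show n - 2 = n - 1 - 1 by ring] at hx
  have h := ar_mul_mem hx
  rwa [dsrc_swap] at h

lemma corner_of_neg {n : ℤ} (hn : n < 0) (i j : Fin Q.r) : G.corner n i j = ⊥ := by
  rw [eq_bot_iff]
  rintro x ⟨h, -⟩
  rw [G.pr_of_neg n hn] at h
  exact h.symm

lemma e_mul_ar_of_ne {i : Fin Q.r} {a : Q.DArrow} (h : dsrc a ≠ i) : G.e i * G.ar a = 0 := by
  rw [← G.e_mul_ar, ← mul_assoc, G.e_mul_e _ _ h.symm, zero_mul]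

lemma ar_mul_e_of_ne {i : Fin Q.r} {a : Q.DArrow} (h : dtgt a ≠ i) : G.ar a * G.e i = 0 := by
  rw [← G.ar_mul_e, mul_assoc, G.e_mul_e _ _ h, mul_zero]

lemma ar_mul_sum_e (a : Q.DArrow) (f : Fin Q.r → B) :
    G.ar a * ∑ l, G.e l * f l = G.ar a * f (dtgt a) := by
  rw [Finset.mul_sum, Finset.sum_eq_single (dtgt a)]
  · rw [← mul_assoc, G.ar_mul_e]
  · intro b _ hb
    rw [← mul_assoc, ar_mul_e_of_ne hb.symm, zero_mul]
  · simp

lemma sum_ar_mul_eq (i : Fin Q.r) (y : Q.DArrow → B) :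
    G.e i * ∑ a, G.ar a * y a = ∑ a : {a : Q.DArrow // dsrc a = i}, G.ar a.1 * y a.1 := by
  have h : ∀ a, G.e i * (G.ar a * y a) = if dsrc a = i then G.ar a * y a else 0 := by
    intro a
    rw [← mul_assoc]
    split_ifs with h
    · rw [← h, G.e_mul_ar]
    · rw [e_mul_ar_of_ne h, zero_mul]
  rw [Finset.mul_sum]
  simp only [h]
  rw [← Finset.sum_filter]
  exact Finset.sum_subtype _ (by simp) (fun a => G.ar a * y a)

variable (G)

/-- Left multiplication by the arrows with source `i`. -/
def arrowMap (n : ℤ) (i j : Fin Q.r) :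
    ((a : {a : Q.DArrow // dsrc a = i}) → G.corner (n - 1) (dtgt a.1) j) →ₗ[k]
      G.corner n i j where
  toFun y := ⟨∑ a, G.ar a.1 * (y a).1, Submodule.sum_mem _ fun a _ => by
    obtain ⟨a, rfl⟩ := a
    exact ar_mul_mem (y ⟨a, rfl⟩).2⟩
  map_add' x y := by
    ext
    simp [mul_add, Finset.sum_add_distrib]
  map_smul' c x := by
    ext
    simp [Finset.smul_sum]

lemma arrowMap_coe (n : ℤ) (i j : Fin Q.r)
    (y : (a : {a : Q.DArrow // dsrc a = i}) → G.corner (n - 1) (dtgt a.1) j) :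
    (G.arrowMap n i j y : B) = ∑ a, G.ar a.1 * (y a).1 := rfl

/-- The map `p ↦ (± a* p)`, where `a` runs over the arrows with source `i`. -/
def meshMap (n : ℤ) (i j : Fin Q.r) :
    G.corner (n - 2) i j →ₗ[k]
      ((a : {a : Q.DArrow // dsrc a = i}) → G.corner (n - 1) (dtgt a.1) j) where
  toFun p := fun a => ⟨dsign k a.1 • (G.ar a.1.swap * p.1),
    Submodule.smul_mem _ _ (ar_swap_mul_mem a.2 p.2)⟩
  map_add' x y := by
    ext
    simp [mul_add]
  map_smul' c x := by
    ext a
    simp [smul_comm c (dsign k a.1)]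

lemma meshMap_coe (n : ℤ) (i j : Fin Q.r) (p : G.corner (n - 2) i j)
    (a : {a : Q.DArrow // dsrc a = i}) :
    (G.meshMap n i j p a : B) = dsign k a.1 • (G.ar a.1.swap * p.1) := rfl

/-- The properties of the preprojective algebra from which its Hilbert series is computed. -/
structure IsPreprojective : Prop where
  finite : ∀ n i j, FiniteDimensional k (G.corner n i j)
  mesh : ∑ a, dsign k a • (G.ar a * G.ar a.swap) = 0
  generates : ∀ x, ∃ (c : Fin Q.r → k) (y : Q.DArrow → B),
    x = ∑ l, c l • G.e l + ∑ a, G.ar a * y a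
  exact : ∀ (c : Fin Q.r → k) (y : Q.DArrow → B), (∀ a, G.e (dtgt a) * y a = y a) →
    ∑ l, c l • G.e l + ∑ a, G.ar a * y a = 0 →
      c = 0 ∧ ∃ p, ∀ a, y a = dsign k a • (G.ar a.swap * p)
  reverse : ∀ (w : List Q.DArrow) i, G.e i * (w.map G.ar).prod = 0 →
    ((w.map Sum.swap).reverse.map G.ar).prod * G.e i = 0

namespace IsPreprojective

variable {G} (hG : G.IsPreprojective)
include hG

lemma e_ne_zero (i : Fin Q.r) : G.e i ≠ 0 := by
  intro h
  have := (hG.exact (Pi.single i 1) 0 (by simp)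
    (by simp [Pi.single_apply, h])).1
  exact one_ne_zero (α := k) (by simpa using congrFun this i)

lemma finrank_corner_zero (i j : Fin Q.r) :
    finrank k (G.corner 0 i j) = if i = j then 1 else 0 := by
  have := hG.finite
  have key : ∀ x ∈ G.corner 0 i j, ∃ c : k, x = c • (G.e i * G.e j) := by
    intro x hx
    obtain ⟨c, y, h⟩ := hG.generates x
    have h1 : G.pr 0 x = ∑ l, c l • G.e l := by
      rw [h, map_add, map_sum, map_sum]
      simp [G.pr_e, G.pr_ar_mul, G.pr_of_neg]
    refine ⟨c i, ?_⟩
    rw [hx.1] at h1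
    rw [← hx.2.2, ← hx.2.1, h1, Finset.mul_sum, Finset.sum_eq_single i]
    · rw [mul_smul_comm, G.e_mul_self, smul_mul_assoc]
    · intro b _ hb
      rw [mul_smul_comm, G.e_mul_e _ _ hb.symm, smul_zero]
    · simp
  split_ifs with hij
  · subst hij
    refine finrank_eq_one ⟨G.e i, ?_⟩ ?_ ?_
    · exact ⟨by simp [G.pr_e], G.e_mul_self i, G.e_mul_self i⟩
    · intro h
      exact hG.e_ne_zero i (congrArg Subtype.val h)
    · rintro ⟨x, hx⟩
      obtain ⟨c, h⟩ := key x hx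
      exact ⟨c, Subtype.ext (by simp [h, G.e_mul_self])⟩
  · rw [finrank_eq_zero_iff_of_free]
    refine ⟨fun x y => Subtype.ext ?_⟩
    obtain ⟨c, h⟩ := key x x.2
    obtain ⟨d, h'⟩ := key y y.2
    rw [h, h', G.e_mul_e _ _ hij, smul_zero, smul_zero]

lemma arrowMap_surjective {n : ℤ} (hn : n ≠ 0) (i j : Fin Q.r) :
    Function.Surjective (G.arrowMap n i j) := by
  rintro ⟨x, hx⟩
  obtain ⟨c, y, h⟩ := hG.generates x
  refine ⟨fun a => ⟨_, pr_mem_corner (n - 1) (dtgt a.1) j (y a.1)⟩, Subtype.ext ?_⟩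
  rw [arrowMap_coe]
  have h1 : x = ∑ a, G.ar a * G.pr (n - 1) (y a) := by
    rw [← hx.1, h, map_add, map_sum, map_sum]
    simp [G.pr_e, G.pr_ar_mul, hn]
  have h2 := congrArg (fun b => G.e i * b * G.e j) h1
  simp only [sum_ar_mul_eq, hx.2.1, hx.2.2, Finset.sum_mul] at h2
  refine Eq.trans (Finset.sum_congr rfl fun a _ => ?_) h2.symm
  rw [← mul_assoc, ← mul_assoc, G.ar_mul_e]

lemma sum_mesh_eq_zero (i : Fin Q.r) :
    ∑ a : {a : Q.DArrow // dsrc a = i}, dsign k a.1 • (G.ar a.1 * G.ar a.1.swap) = 0 := by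
  have h := sum_ar_mul_eq (G := G) i fun a => dsign k a • G.ar a.swap
  simp only [mul_smul_comm, hG.mesh, mul_zero] at h
  exact h.symm

lemma arrowMap_comp_meshMap (n : ℤ) (i j : Fin Q.r) :
    G.arrowMap n i j ∘ₗ G.meshMap n i j = 0 := by
  ext p
  rw [LinearMap.comp_apply, arrowMap_coe]
  simp only [meshMap_coe]
  have h := congrArg (· * p.1) (hG.sum_mesh_eq_zero i)
  simp only [Finset.sum_mul, smul_mul_assoc, mul_assoc, zero_mul] at h
  simpa only [mul_smul_comm] using! h

lemma ker_arrowMap_le (n : ℤ) (i j : Fin Q.r) :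
    LinearMap.ker (G.arrowMap n i j) ≤ LinearMap.range (G.meshMap n i j) := by
  intro y hy
  rw [LinearMap.mem_ker] at hy
  have hy' := congrArg Subtype.val hy
  rw [arrowMap_coe] at hy'
  let y' : Q.DArrow → B := fun a => if h : dsrc a = i then (y ⟨a, h⟩).1 else 0
  have hy1 : ∀ a : {a : Q.DArrow // dsrc a = i}, y' a.1 = (y a).1 := fun a => dif_pos a.2
  have hsum : ∑ a, G.ar a * y' a = 0 := by
    have h0 : ∑ a, G.ar a * y' a = G.e i * ∑ a, G.ar a * y' a := by
      rw [Finset.mul_sum]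
      refine Finset.sum_congr rfl fun a _ => ?_
      by_cases h : dsrc a = i
      · rw [← mul_assoc, ← h, G.e_mul_ar]
      · simp [y', h]
    rw [h0, sum_ar_mul_eq]
    simpa only [hy1] using! hy'
  have htgt : ∀ a, G.e (dtgt a) * y' a = y' a := by
    intro a
    by_cases h : dsrc a = i
    · simp only [y', dif_pos h]
      exact (y ⟨a, h⟩).2.2.1
    · simp [y', h]
  obtain ⟨-, p, hp⟩ := hG.exact 0 y' htgt (by simpa using hsum)
  refine ⟨⟨_, pr_mem_corner (n - 2) i j p⟩, ?_⟩
  funext a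
  apply Subtype.ext
  rw [meshMap_coe]
  have ha : G.ar a.1.swap * G.e i = G.ar a.1.swap := by
    simpa only [dtgt_swap, a.2] using G.ar_mul_e a.1.swap
  have h1 := hp a.1
  rw [hy1] at h1
  have h2 := (y a).2
  rw [← h2.2.2, ← h2.1]
  simp only [h1]
  rw [map_smul, G.pr_ar_mul, show n - 1 - 1 = n - 2 by ring, smul_mul_assoc,
    ← mul_assoc, ← mul_assoc, ha]

lemma sum_finrank_le (n : ℤ) (i j : Fin Q.r) :
    ∑ a : {a : Q.DArrow // dsrc a = i}, finrank k (G.corner (n - 1) (dtgt a.1) j)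
        + (if n = 0 ∧ i = j then 1 else 0)
      ≤ finrank k (G.corner n i j) + finrank k (G.corner (n - 2) i j) := by
  have := hG.finite
  by_cases hn : n = 0
  · subst hn
    have h : ∀ a : {a : Q.DArrow // dsrc a = i},
        finrank k (G.corner (0 - 1) (dtgt a.1) j) = 0 := fun a => by
      rw [corner_of_neg (by norm_num), finrank_bot]
    simp only [h, Finset.sum_const_zero, hG.finrank_corner_zero, true_and]
    omega
  · simp only [hn, false_and, if_false, add_zero]
    have h := finrank_add_finrank_le_of_exact (V₃ := (⊥ : Submodule k k)) (G.arrowMap n i j)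
      (G.meshMap n i j) 0 (hG.ker_arrowMap_le n i j) (by simp)
      (fun x y _ => Subsingleton.elim x y)
    rw [finrank_bot, finrank_pi_fintype, add_zero] at h
    exact h

/-- A nonzero element of `e_i B_n e_j` annihilated by all arrows forces `e_i B_{n+1} = 0`. -/
theorem e_mul_word_eq_zero {n : ℕ} {i j : Fin Q.r} {x : B} (hx : x ∈ G.corner n i j)
    (hx0 : x ≠ 0) (hsoc : ∀ a, G.ar a * x = 0) (w : List Q.DArrow) (hw : w.length = n + 1) :
    G.e i * (w.map G.ar).prod = 0 := by
  have key : ∀ m : ℕ, ∃ φ ψ : Dual k B →ₗ[k] B,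
      (∀ l f, G.e l * ψ f = ψ (f ∘ₗ LinearMap.mulRight k (G.e l))) ∧
      (∀ a f, G.ar a * ψ f = φ (f ∘ₗ LinearMap.mulRight k (G.ar a))) ∧
      (∀ f, G.pr (n - m) (ψ f) = ψ f) ∧
      ∀ w : List Q.DArrow, w.length = m → ∀ f : Dual k B,
        (w.map G.ar).prod * ψ f = f (G.e i * (w.map G.ar).prod) • x := by
    intro m
    induction m with
    | zero =>
      refine ⟨0, (LinearMap.toSpanSingleton k B x) ∘ₗ (Dual.eval k B (G.e i)), ?_, ?_, ?_, ?_⟩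
      · intro l f
        simp only [LinearMap.comp_apply, LinearMap.toSpanSingleton_apply, Dual.eval_apply,
          LinearMap.mulRight_apply, mul_smul_comm]
        by_cases h : l = i
        · rw [h, hx.2.1, G.e_mul_self]
        · rw [e_mul_of_ne hx h, G.e_mul_e _ _ (Ne.symm h), map_zero, zero_smul, smul_zero]
      · intro a f
        simp [hsoc]
      · intro f
        simp [hx.1]
      · intro w hw f
        rw [List.length_eq_zero_iff] at hw
        subst hw
        simp
    | succ m ih =>
      obtain ⟨φ, ψ, hψe, hψa, hψp, hψw⟩ := ih
      let D : B →ₗ[k] (Q.DArrow → B) := LinearMap.pi fun a => LinearMap.mulLeft k (G.ar a)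
      let E : Dual k B →ₗ[k] (Q.DArrow → B) := LinearMap.pi fun a =>
        ψ ∘ₗ (LinearMap.mulRight k (G.ar a)).dualMap
      have hmem : ∀ f, E f ∈ LinearMap.range D := by
        intro f
        let y : Q.DArrow → B := fun a =>
          dsign k a • ψ (f ∘ₗ LinearMap.mulRight k (G.ar a.swap))
        have hy1 : ∀ a, G.e (dtgt a) * y a = y a := by
          intro a
          simp only [y, mul_smul_comm, hψe]
          congr 2
          ext b
          simp only [LinearMap.comp_apply, LinearMap.mulRight_apply, mul_assoc]
          rw [← dsrc_swap, G.e_mul_ar]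
        have hy2 : ∑ a, G.ar a * y a = 0 := by
          simp only [y, hψa, ← map_smul, ← map_sum]
          convert map_zero φ
          ext b
          have h := congrArg (fun c => f (b * c)) hG.mesh
          simp only [Finset.mul_sum, map_sum, mul_smul_comm, map_smul, mul_zero, map_zero] at h
          simpa only [LinearMap.sum_apply, LinearMap.smul_apply, LinearMap.comp_apply,
            LinearMap.mulRight_apply, mul_assoc, LinearMap.zero_apply] using h
        obtain ⟨-, p, hp⟩ := hG.exact 0 y hy1 (by simpa using hy2)
        refine ⟨p, funext fun a => ?_⟩
        have h := congrArg (dsign k a.swap • ·) (hp a.swap)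
        simp only [y, smul_smul, Sum.swap_swap] at h
        have hs : dsign k a.swap * dsign k a.swap = 1 := dsign_mul_self k _
        rw [hs, one_smul, one_smul] at h
        exact h.symm
      obtain ⟨χ, hχ⟩ := projective_lifting_property D.rangeRestrict
        (LinearMap.codRestrict _ E hmem) D.surjective_rangeRestrict
      have hχa : ∀ a f, G.ar a * χ f = ψ (f ∘ₗ LinearMap.mulRight k (G.ar a)) := by
        intro a f
        have h := congrArg Subtype.val (LinearMap.congr_fun hχ f)
        exact congrFun h a
      let ψ' : Dual k B →ₗ[k] B := ∑ l, LinearMap.mulLeft k (G.e l) ∘ₗ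
        G.pr (n - (m + 1 : ℕ)) ∘ₗ χ ∘ₗ (LinearMap.mulRight k (G.e l)).dualMap
      have hψ' : ∀ f, ψ' f = ∑ l, G.e l *
          G.pr (n - (m + 1 : ℕ)) (χ (f ∘ₗ LinearMap.mulRight k (G.e l))) := by
        intro f
        simp only [ψ', LinearMap.sum_apply]
        rfl
      have hψ'a : ∀ a f, G.ar a * ψ' f = ψ (f ∘ₗ LinearMap.mulRight k (G.ar a)) := by
        intro a f
        rw [hψ', ar_mul_sum_e]
        have h := G.pr_ar_mul (n - m) a (χ (f ∘ₗ LinearMap.mulRight k (G.e (dtgt a))))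
        rw [show (n : ℤ) - (m + 1 : ℕ) = n - m - 1 by push_cast; ring, ← h, hχa, hψp]
        congr 1
        ext b
        simp [mul_assoc, G.ar_mul_e]
      refine ⟨ψ, ψ', ?_, hψ'a, ?_, ?_⟩
      · intro l f
        rw [hψ', hψ', Finset.mul_sum, Finset.sum_eq_single l, Finset.sum_eq_single l]
        · rw [← mul_assoc, G.e_mul_self]
          congr 3
          ext b
          simp [mul_assoc, G.e_mul_self]
        · intro b _ hb
          have : (f ∘ₗ LinearMap.mulRight k (G.e l)) ∘ₗ LinearMap.mulRight k (G.e b) = 0 := by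
            ext c
            simp [mul_assoc, G.e_mul_e _ _ hb]
          rw [this, map_zero, map_zero, mul_zero]
        · simp
        · intro b _ hb
          rw [← mul_assoc, G.e_mul_e _ _ hb.symm, zero_mul]
        · simp
      · intro f
        simp only [hψ', map_sum, G.pr_e_mul, G.pr_pr]
      · intro w hw f
        obtain ⟨w, a, rfl⟩ : ∃ w' a, w = w' ++ [a] := by
          rcases List.eq_nil_or_concat w with rfl | ⟨w', a, rfl⟩
          · simp at hw
          · exact ⟨w', a, by simp⟩
        have hw' : w.length = m := by simpa using hw
        simp only [List.map_append, List.map_cons, List.map_nil, List.prod_append,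
          List.prod_singleton]
        rw [mul_assoc, hψ'a, hψw w hw']
        simp [mul_assoc]
  obtain ⟨φ, ψ, -, -, hp, hψw⟩ := key (n + 1)
  have hψ0 : ∀ f, ψ f = 0 := by
    intro f
    rw [← hp f, G.pr_of_neg _ (by push_cast; linarith)]
    rfl
  rw [← forall_dual_apply_eq_zero_iff k]
  intro f
  have h := hψw w hw f
  rw [hψ0, mul_zero] at h
  exact (smul_eq_zero.mp h.symm).resolve_right hx0

lemma corner_le_span (n : ℕ) (i j : Fin Q.r) :
    G.corner n i j ≤ Submodule.span k
      {x | ∃ w : List Q.DArrow, w.length = n ∧ x = (w.map G.ar).prod * G.e j} := by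
  induction n generalizing i with
  | zero =>
    intro x hx
    obtain ⟨c, y, h⟩ := hG.generates x
    have h1 : G.pr 0 x = ∑ l, c l • G.e l := by
      rw [h, map_add, map_sum, map_sum]
      simp [G.pr_e, G.pr_ar_mul, G.pr_of_neg]
    have h2 : x = c j • G.e j := by
      have h3 := hx.1
      rw [Nat.cast_zero, h1] at h3
      rw [← hx.2.2, ← h3, Finset.sum_mul, Finset.sum_eq_single j]
      · rw [smul_mul_assoc, G.e_mul_self]
      · intro b _ hb
        rw [smul_mul_assoc, G.e_mul_e _ _ hb, smul_zero]
      · simp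
    rw [h2]
    exact Submodule.smul_mem _ _ (Submodule.subset_span ⟨[], rfl, by simp⟩)
  | succ n ih =>
    intro x hx
    obtain ⟨y, hy⟩ := hG.arrowMap_surjective (n := (n + 1 : ℕ)) (by omega) i j ⟨x, hx⟩
    have hy' := congrArg Subtype.val hy
    rw [arrowMap_coe] at hy'
    dsimp only at hy'
    rw [← hy']
    refine Submodule.sum_mem _ fun a _ => ?_
    have h : (y a).1 ∈ G.corner n (dtgt a.1) j := by
      have hn : ((n + 1 : ℕ) : ℤ) - 1 = n := by push_cast; ring
      exact hn ▸ (y a).2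
    have h1 := Submodule.mem_map_of_mem (f := LinearMap.mulLeft k (G.ar a.1)) (ih _ h)
    rw [Submodule.map_span] at h1
    refine Submodule.span_mono ?_ h1
    rintro _ ⟨_, ⟨w, hw, rfl⟩, rfl⟩
    exact ⟨a.1 :: w, by simp [hw], by simp [mul_assoc]⟩

lemma corner_eq_bot {n : ℕ} {i : Fin Q.r}
    (h : ∀ w : List Q.DArrow, w.length = n + 1 → G.e i * (w.map G.ar).prod = 0) {m : ℕ}
    (hm : n < m) (l : Fin Q.r) : G.corner m l i = ⊥ := by
  rw [eq_bot_iff]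
  refine (hG.corner_le_span m l i).trans (Submodule.span_le.mpr ?_)
  rintro _ ⟨w, hw, rfl⟩
  have h1 : ∀ w : List Q.DArrow, w.length = n + 1 → (w.map G.ar).prod * G.e i = 0 := by
    intro w hw
    have h2 := hG.reverse _ i (h (w.map Sum.swap).reverse (by simpa using hw))
    simpa [Function.comp_def] using h2
  have h3 := h1 (w.drop (m - (n + 1))) (by rw [List.length_drop]; omega)
  rw [← List.take_append_drop (m - (n + 1)) w, List.map_append, List.prod_append, mul_assoc, h3,
    mul_zero]
  exact Submodule.zero_mem _

/-- On a non-Dynkin quiver no nonzero element is annihilated by all arrows. -/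
theorem eq_zero_of_ar_mul_eq_zero (hconn : Q.Connected) (hnd : ¬ Q.IsDynkin) {n : ℤ}
    {i j : Fin Q.r} {x : B} (hx : x ∈ G.corner n i j) (hsoc : ∀ a, G.ar a * x = 0) : x = 0 := by
  by_contra hx0
  rcases lt_or_ge n 0 with hn | hn
  · rw [corner_of_neg hn] at hx
    exact hx0 hx
  lift n to ℕ using hn
  have hbot := fun m (hm : n < m) l =>
    hG.corner_eq_bot (hG.e_mul_word_eq_zero hx hx0 hsoc) hm l
  let d : ℤ → Fin Q.r → ℝ := fun m l => finrank k (G.corner m l i)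
  have hd_neg : ∀ m < 0, ∀ l, d m l = 0 := fun m hm l => by
    simp only [d]; rw [corner_of_neg hm, finrank_bot, Nat.cast_zero]
  have hd_big : ∀ m : ℕ, n < m → ∀ l, d m l = 0 := fun m hm l => by
    simp only [d]; rw [hbot m hm, finrank_bot, Nat.cast_zero]
  have hle : ∀ (m : ℤ) l, ∑ a : {a : Q.DArrow // dsrc a = l}, d (m - 1) (dtgt a.1)
      + (if m = 0 ∧ l = i then 1 else 0) ≤ d m l + d (m - 2) l := by
    intro m l
    have h := hG.sum_finrank_le m l i
    simp only [d]
    exact_mod_cast h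
  let w : Fin Q.r → ℝ := fun l => ∑ m ∈ Finset.range (n + 1), d m l
  have hw : ∀ c : ℕ, c ≤ 2 → ∀ l, ∑ m ∈ Finset.range (n + 3), d ((m : ℤ) - c) l = w l := by
    intro c hc l
    rw [show n + 3 = c + (n + 3 - c) by omega, Finset.sum_range_add]
    have h1 : ∑ m ∈ Finset.range c, d ((m : ℤ) - c) l = 0 :=
      Finset.sum_eq_zero fun m hm => hd_neg _ (by rw [Finset.mem_range] at hm; omega) l
    have h2 : n + 3 - c = (n + 1) + (2 - c) := by omega
    rw [h1, zero_add, h2, Finset.sum_range_add]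
    have h3 : ∑ m ∈ Finset.range (2 - c), d (((c + (n + 1 + m) : ℕ) : ℤ) - c) l = 0 :=
      Finset.sum_eq_zero fun m _ => by
        rw [show ((c + (n + 1 + m) : ℕ) : ℤ) - c = (n + 1 + m : ℕ) by push_cast; ring]
        exact hd_big _ (by omega) l
    rw [h3, add_zero]
    exact Finset.sum_congr rfl fun m _ => by
      rw [show ((c + m : ℕ) : ℤ) - c = m by push_cast; ring]
  refine hnd (isDynkin_of_superharmonic hconn w
    (fun l => Finset.sum_nonneg fun m _ => Nat.cast_nonneg _) i fun l => ?_)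
  have h := Finset.sum_le_sum fun m (_ : m ∈ Finset.range (n + 3)) => hle m l
  rw [Finset.sum_add_distrib, Finset.sum_add_distrib, Finset.sum_comm] at h
  have e0 := hw 0 (by norm_num) l
  have e2 := hw 2 (by norm_num) l
  have e1 := fun l => hw 1 (by norm_num) l
  simp only [Nat.cast_zero, sub_zero, Nat.cast_one, Nat.cast_ofNat] at e0 e1 e2
  simp only [e0, e1, e2] at h
  have h4 : ∑ m ∈ Finset.range (n + 3), (if (m : ℤ) = 0 ∧ l = i then (1 : ℝ) else 0)
      = if l = i then 1 else 0 := by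
    rw [Finset.sum_eq_single 0]
    · simp
    · intro b _ hb
      simp [hb]
    · simp
  rw [h4] at h
  linarith

theorem finrank_corner_eq (hconn : Q.Connected) (hnd : ¬ Q.IsDynkin) (n : ℤ) (i j : Fin Q.r) :
    (finrank k (G.corner n i j) : ℤ)
      = ∑ a : {a : Q.DArrow // dsrc a = i}, (finrank k (G.corner (n - 1) (dtgt a.1) j) : ℤ)
        - finrank k (G.corner (n - 2) i j) + (if n = 0 ∧ i = j then 1 else 0) := by
  have := hG.finite
  by_cases hn : n = 0
  · subst hn
    have h : ∀ a : {a : Q.DArrow // dsrc a = i},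
        finrank k (G.corner (0 - 1) (dtgt a.1) j) = 0 := fun a => by
      rw [corner_of_neg (by norm_num), finrank_bot]
    have h' : finrank k (G.corner (0 - 2) i j) = 0 := by
      rw [corner_of_neg (by norm_num), finrank_bot]
    simp only [h, h', hG.finrank_corner_zero]
    simp
  · have hinj : Function.Injective (G.meshMap n i j) := by
      rw [injective_iff_map_eq_zero]
      rintro ⟨p, hp⟩ h
      refine Subtype.ext (hG.eq_zero_of_ar_mul_eq_zero hconn hnd hp fun a => ?_)
      by_cases ha : dtgt a = i
      · have h1 := congrArg Subtype.val (congrFun h ⟨a.swap, by rw [dsrc_swap, ha]⟩)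
        rw [meshMap_coe] at h1
        have h2 := congrArg (dsign k a.swap • ·) h1
        have hs : dsign k a.swap * dsign k a.swap = 1 := dsign_mul_self k _
        simpa [smul_smul, hs] using h2
      · show G.ar a * p = 0
        rw [← hp.2.1, ← mul_assoc, ar_mul_e_of_ne ha, zero_mul]
    have h := finrank_eq_of_shortExact _ _ (hG.arrowMap_surjective hn i j)
      (le_antisymm (hG.ker_arrowMap_le n i j)
        (LinearMap.range_le_ker_iff.mpr (hG.arrowMap_comp_meshMap n i j))) hinj
    rw [finrank_pi_fintype] at h
    have h' := congrArg (Nat.cast : ℕ → ℤ) h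
    push_cast at h'
    simp only [hn, false_and, if_false]
    linarith

end IsPreprojective

end QuiverGrading

/-- Elements of a `k`-algebra satisfying the defining relations of the quiver Heisenberg algebra. -/
structure HeisenbergRep {k : Type} [Field k] {Q : FinQuiver} (v : Fin Q.r → k) (A : Type*)
    [Ring A] [Algebra k A] where
  e : Fin Q.r → A
  ar : Q.DArrow → A
  z : A
  e_mul_self : ∀ i, e i * e i = e i
  e_mul_e : ∀ i j, i ≠ j → e i * e j = 0
  sum_e : ∑ i, e i = 1
  e_mul_ar : ∀ a, e (dsrc a) * ar a = ar a
  ar_mul_e : ∀ a, ar a * e (dtgt a) = ar a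
  z_mul_e : ∀ i, z * e i = e i * z
  z_mul_ar : ∀ a, z * ar a = ar a * z
  mesh : ∑ a, dsign k a • (ar a * ar a.swap) = z * ∑ l, v l • e l

namespace HeisenbergRep

variable {k : Type} [Field k] {Q : FinQuiver} {v : Fin Q.r → k} {A : Type*} [Ring A] [Algebra k A]
  (R : HeisenbergRep v A)

/-- The images of the generators of the quiver Heisenberg algebra. -/
def gen : QHGen Q → A
  | .vert i => R.e i
  | .fwd a => R.ar (Sum.inl a)
  | .bwd a => R.ar (Sum.inr a)
  | .z => R.z

lemma e_mul_sum_mesh (i : Fin Q.r) :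
    R.e i * ∑ a, dsign k a • (R.ar a * R.ar a.swap)
      = (∑ a : Q.Arrow, if Q.src a = i then R.ar (Sum.inl a) * R.ar (Sum.inr a) else 0)
        - ∑ a : Q.Arrow, if Q.tgt a = i then R.ar (Sum.inr a) * R.ar (Sum.inl a) else 0 := by
  have h : ∀ a, R.e i * R.ar a = if dsrc a = i then R.ar a else 0 := by
    intro a
    split_ifs with h
    · rw [← h, R.e_mul_ar]
    · rw [← R.e_mul_ar, ← mul_assoc, R.e_mul_e _ _ (Ne.symm h), zero_mul]
  simp only [Finset.mul_sum, mul_smul_comm, ← mul_assoc, h]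
  rw [sub_eq_add_neg, ← Finset.sum_neg_distrib]
  refine (Fintype.sum_sum_type _).trans ?_
  congr 1
  · refine Finset.sum_congr rfl fun a _ => ?_
    by_cases ha : Q.src a = i <;> simp [dsign, dsrc, ha]
  · refine Finset.sum_congr rfl fun a _ => ?_
    by_cases ha : Q.tgt a = i <;> simp [dsign, dsrc, ha]

lemma e_mul_mesh (i : Fin Q.r) :
    R.e i * ∑ a, dsign k a • (R.ar a * R.ar a.swap) = v i • (R.z * R.e i) := by
  rw [R.mesh, ← mul_assoc, ← R.z_mul_e, mul_assoc, Finset.mul_sum, Finset.sum_eq_single i]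
  · rw [mul_smul_comm, R.e_mul_self, mul_smul_comm]
  · intro b _ hb
    rw [mul_smul_comm, R.e_mul_e _ _ hb.symm, smul_zero]
  · simp

lemma lift_rel ⦃x y : FreeAlgebra k (QHGen Q)⦄ (h : QHRel k Q v x y) :
    FreeAlgebra.lift k R.gen x = FreeAlgebra.lift k R.gen y := by
  induction h with
  | vert_idem i => simpa [gen] using R.e_mul_self i
  | vert_orth i j h => simpa [gen] using R.e_mul_e i j h
  | vert_sum => simpa [gen] using R.sum_e
  | fwd_left a => simpa [gen, dsrc] using R.e_mul_ar (Sum.inl a)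
  | fwd_right a => simpa [gen, dtgt] using R.ar_mul_e (Sum.inl a)
  | bwd_left a => simpa [gen, dsrc] using R.e_mul_ar (Sum.inr a)
  | bwd_right a => simpa [gen, dtgt] using R.ar_mul_e (Sum.inr a)
  | central g =>
    cases g with
    | vert i => simpa [gen] using R.z_mul_e i
    | fwd a => simpa [gen] using R.z_mul_ar (Sum.inl a)
    | bwd a => simpa [gen] using R.z_mul_ar (Sum.inr a)
    | z => rfl
  | heisenberg i =>
    have h := (R.e_mul_sum_mesh i).symm.trans (R.e_mul_mesh i)
    simpa [gen, qhMesh, apply_ite (FreeAlgebra.lift k R.gen)] using h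

/-- The homomorphism from the quiver Heisenberg algebra determined by a representation. -/
noncomputable def lift : QHAlg k Q v →ₐ[k] A :=
  RingQuot.liftAlgHom k ⟨FreeAlgebra.lift k R.gen, R.lift_rel⟩

lemma lift_qhGen (g : QHGen Q) : R.lift (qhGen k Q v g) = R.gen g := by
  simp [lift, qhGen]

variable (v)

/-- The tautological representation in the quiver Heisenberg algebra itself. -/
noncomputable def taut : HeisenbergRep v (QHAlg k Q v) where
  e i := qhGen k Q v (.vert i)
  ar := Sum.elim (fun a => qhGen k Q v (.fwd a)) (fun a => qhGen k Q v (.bwd a))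
  z := qhGen k Q v .z
  e_mul_self i := by
    simpa [qhGen] using RingQuot.mkAlgHom_rel k (QHRel.vert_idem (k := k) (v := v) i)
  e_mul_e i j h := by
    simpa [qhGen] using RingQuot.mkAlgHom_rel k (QHRel.vert_orth (k := k) (v := v) i j h)
  sum_e := by
    simpa [qhGen] using RingQuot.mkAlgHom_rel k (QHRel.vert_sum (k := k) (v := v))
  e_mul_ar a := by
    cases a with
    | inl a =>
      simpa [qhGen, dsrc] using RingQuot.mkAlgHom_rel k (QHRel.fwd_left (k := k) (v := v) a)
    | inr a =>
      simpa [qhGen, dsrc] using RingQuot.mkAlgHom_rel k (QHRel.bwd_left (k := k) (v := v) a)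
  ar_mul_e a := by
    cases a with
    | inl a =>
      simpa [qhGen, dtgt] using RingQuot.mkAlgHom_rel k (QHRel.fwd_right (k := k) (v := v) a)
    | inr a =>
      simpa [qhGen, dtgt] using RingQuot.mkAlgHom_rel k (QHRel.bwd_right (k := k) (v := v) a)
  z_mul_e i := by
    simpa [qhGen] using RingQuot.mkAlgHom_rel k (QHRel.central (k := k) (v := v) (.vert i))
  z_mul_ar a := by
    cases a with
    | inl a =>
      simpa [qhGen] using RingQuot.mkAlgHom_rel k (QHRel.central (k := k) (v := v) (.fwd a))
    | inr a =>
      simpa [qhGen] using RingQuot.mkAlgHom_rel k (QHRel.central (k := k) (v := v) (.bwd a))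
  mesh := by
    have h := fun i => RingQuot.mkAlgHom_rel k (QHRel.heisenberg (k := k) (v := v) i)
    have h' := Finset.sum_congr (rfl : Finset.univ = Finset.univ) fun i _ => h i
    simp only [qhMesh, map_sub, map_sum, apply_ite (RingQuot.mkAlgHom k (QHRel k Q v)), map_zero,
      map_smul, map_mul, Finset.sum_sub_distrib] at h'
    rw [Finset.sum_comm] at h'
    conv at h' => enter [1, 2]; rw [Finset.sum_comm]
    simp only [Finset.sum_ite_eq, Finset.mem_univ, if_true] at h'
    simp only [Finset.mul_sum, mul_smul_comm]
    refine Eq.trans ?_ h'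
    rw [sub_eq_add_neg, ← Finset.sum_neg_distrib]
    refine (Fintype.sum_sum_type _).trans ?_
    have hneg : ∀ x : QHAlg k Q v, (-1 : k) • x = -x := fun x => by exact neg_one_smul k x
    exact congrArg₂ _ (Finset.sum_congr rfl fun a _ => one_smul k _)
      (Finset.sum_congr rfl fun a _ => hneg _)

lemma taut_gen (g : QHGen Q) : (taut v).gen g = qhGen k Q v g := by
  cases g <;> rfl

end HeisenbergRep

namespace QHAlg

variable {k : Type} [Field k] {Q : FinQuiver} {v : Fin Q.r → k}

theorem gen_induction {P : QHAlg k Q v → Prop} (x : QHAlg k Q v) (one : P 1)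
    (add : ∀ x y, P x → P y → P (x + y)) (smul : ∀ (c : k) x, P x → P (c • x))
    (mul : ∀ g x, P x → P (qhGen k Q v g * x)) : P x := by
  have key : ∀ a : FreeAlgebra k (QHGen Q), ∀ y, P y →
      P (RingQuot.mkAlgHom k (QHRel k Q v) a * y) := by
    intro a
    induction a using FreeAlgebra.induction with
    | grade0 r =>
      intro y hy
      rw [AlgHom.commutes, ← Algebra.smul_def]
      exact smul r y hy
    | grade1 g => exact fun y hy => mul g y hy
    | mul a b ha hb =>
      intro y hy
      rw [map_mul, mul_assoc]
      exact ha _ (hb y hy)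
    | add a b ha hb =>
      intro y hy
      rw [map_add, add_mul]
      exact add _ _ (ha y hy) (hb y hy)
  obtain ⟨a, rfl⟩ := RingQuot.mkAlgHom_surjective k (QHRel k Q v) x
  simpa using key a 1 one

end QHAlg

namespace HeisenbergRep

variable {k : Type} [Field k] {Q : FinQuiver} {v : Fin Q.r → k} {A : Type} [Ring A] [Algebra k A]

/-- The universal property of the quiver Heisenberg algebra, together with the fact that it is
generated by the defining elements. -/
structure IsUniversal (R : HeisenbergRep v A) : Prop where
  induction : ∀ P : A → Prop, P 1 → (∀ x y, P x → P y → P (x + y)) →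
    (∀ (c : k) x, P x → P (c • x)) → (∀ i x, P x → P (R.e i * x)) →
    (∀ a x, P x → P (R.ar a * x)) → (∀ x, P x → P (R.z * x)) → ∀ x, P x
  lift : ∀ {B : Type} [Ring B] [Algebra k B] (S : HeisenbergRep v B), ∃ f : A →ₐ[k] B,
    (∀ i, f (R.e i) = S.e i) ∧ (∀ a, f (R.ar a) = S.ar a) ∧ f R.z = S.z

variable (v) in
theorem isUniversal_taut : (taut v).IsUniversal where
  induction P one add smul e ar z x := by
    refine QHAlg.gen_induction x one add smul fun g x hx => ?_
    cases g with
    | vert i => exact e i x hx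
    | fwd a => exact ar (Sum.inl a) x hx
    | bwd a => exact ar (Sum.inr a) x hx
    | z => exact z x hx
  lift S := by
    refine ⟨S.lift, fun i => S.lift_qhGen (.vert i), fun a => ?_, S.lift_qhGen .z⟩
    cases a with
    | inl a => exact S.lift_qhGen (.fwd a)
    | inr a => exact S.lift_qhGen (.bwd a)

end HeisenbergRep

namespace HeisenbergRep

variable {k : Type} [Field k] {Q : FinQuiver} {v : Fin Q.r → k} {A : Type} [Ring A] [Algebra k A]
  (R : HeisenbergRep v A)

/-- The representation in Laurent polynomials which records degrees. -/
noncomputable def laurent : HeisenbergRep v (AddMonoidAlgebra A ℤ) where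
  e i := .single 0 (R.e i)
  ar a := .single 1 (R.ar a)
  z := .single 2 R.z
  e_mul_self i := by rw [AddMonoidAlgebra.single_mul_single, R.e_mul_self, add_zero]
  e_mul_e i j h := by
    rw [AddMonoidAlgebra.single_mul_single, R.e_mul_e i j h, AddMonoidAlgebra.single_zero]
  sum_e := by
    have h := map_sum (AddMonoidAlgebra.singleAddHom (R := A) (0 : ℤ)) R.e Finset.univ
    rw [R.sum_e] at h
    exact h.symm
  e_mul_ar a := by rw [AddMonoidAlgebra.single_mul_single, R.e_mul_ar, zero_add]
  ar_mul_e a := by rw [AddMonoidAlgebra.single_mul_single, R.ar_mul_e, add_zero]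
  z_mul_e i := by
    rw [AddMonoidAlgebra.single_mul_single, AddMonoidAlgebra.single_mul_single, R.z_mul_e,
      add_comm]
  z_mul_ar a := by
    rw [AddMonoidAlgebra.single_mul_single, AddMonoidAlgebra.single_mul_single, R.z_mul_ar,
      add_comm]
  mesh := by
    have h := congrArg (AddMonoidAlgebra.singleAddHom (R := A) (2 : ℤ)) R.mesh
    simp only [Finset.mul_sum, map_sum, mul_smul_comm] at h
    simp only [Finset.mul_sum, mul_smul_comm, AddMonoidAlgebra.single_mul_single,
      AddMonoidAlgebra.smul_single]
    exact h

namespace IsUniversal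

variable {R} (hR : R.IsUniversal)
include hR

theorem exists_pr : ∃ pr : ℤ → A →ₗ[k] A, (∀ n, pr n 1 = if n = 0 then 1 else 0) ∧
    (∀ n i x, pr n (R.e i * x) = R.e i * pr n x) ∧
    (∀ n a x, pr n (R.ar a * x) = R.ar a * pr (n - 1) x) ∧
    ∀ n x, pr n (R.z * x) = R.z * pr (n - 2) x := by
  obtain ⟨f, hfe, hfa, hfz⟩ := hR.lift R.laurent
  refine ⟨fun n => Finsupp.lapply n ∘ₗ
    (AddMonoidAlgebra.coeffLinearEquiv k).toLinearMap ∘ₗ f.toLinearMap, ?_, ?_, ?_, ?_⟩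
  · intro n
    show (f 1).coeff n = _
    rw [map_one, AddMonoidAlgebra.one_def, AddMonoidAlgebra.coeff_single, Finsupp.single_apply]
    simp [eq_comm]
  · intro n i x
    show (f _).coeff n = _ * (f _).coeff n
    rw [map_mul, hfe]
    exact AddMonoidAlgebra.coeff_single_zero_mul _ _ _
  · intro n a x
    show (f _).coeff n = _ * (f _).coeff (n - 1)
    rw [map_mul, hfa, sub_eq_neg_add]
    exact AddMonoidAlgebra.coeff_single_mul_apply _ _ _ _
  · intro n x
    show (f _).coeff n = _ * (f _).coeff (n - 2)
    rw [map_mul, hfz, sub_eq_neg_add]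
    exact AddMonoidAlgebra.coeff_single_mul_apply _ _ _ _

/-- The homogeneous projections of the quiver Heisenberg algebra. -/
noncomputable def pr : ℤ → A →ₗ[k] A := hR.exists_pr.choose

lemma pr_one (n : ℤ) : hR.pr n 1 = if n = 0 then 1 else 0 := hR.exists_pr.choose_spec.1 n

lemma pr_e_mul (n : ℤ) (i : Fin Q.r) (x : A) : hR.pr n (R.e i * x) = R.e i * hR.pr n x :=
  hR.exists_pr.choose_spec.2.1 n i x

lemma pr_ar_mul (n : ℤ) (a : Q.DArrow) (x : A) :
    hR.pr n (R.ar a * x) = R.ar a * hR.pr (n - 1) x :=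
  hR.exists_pr.choose_spec.2.2.1 n a x

lemma pr_z_mul (n : ℤ) (x : A) : hR.pr n (R.z * x) = R.z * hR.pr (n - 2) x :=
  hR.exists_pr.choose_spec.2.2.2 n x

lemma pr_e (n : ℤ) (i : Fin Q.r) : hR.pr n (R.e i) = if n = 0 then R.e i else 0 := by
  rw [← mul_one (R.e i), hR.pr_e_mul, hR.pr_one, mul_ite, mul_one, mul_zero]

lemma pr_mul_e (n : ℤ) (x : A) (i : Fin Q.r) : hR.pr n (x * R.e i) = hR.pr n x * R.e i := by
  revert n
  refine hR.induction (fun x => ∀ n, hR.pr n (x * R.e i) = hR.pr n x * R.e i) ?_ ?_ ?_ ?_ ?_ ?_ x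
  · intro n
    rw [one_mul, hR.pr_e, hR.pr_one, ite_mul, one_mul, zero_mul]
  · intro x y hx hy n
    rw [add_mul, map_add, map_add, hx, hy, add_mul]
  · intro c x hx n
    rw [smul_mul_assoc, map_smul, map_smul, hx, smul_mul_assoc]
  · intro j x hx n
    rw [mul_assoc, hR.pr_e_mul, hR.pr_e_mul, hx, mul_assoc]
  · intro a x hx n
    rw [mul_assoc, hR.pr_ar_mul, hR.pr_ar_mul, hx, mul_assoc]
  · intro x hx n
    rw [mul_assoc, hR.pr_z_mul, hR.pr_z_mul, hx, mul_assoc]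

lemma pr_pr (n : ℤ) (x : A) : hR.pr n (hR.pr n x) = hR.pr n x := by
  revert n
  refine hR.induction (fun x => ∀ n, hR.pr n (hR.pr n x) = hR.pr n x) ?_ ?_ ?_ ?_ ?_ ?_ x
  · intro n
    rw [hR.pr_one]
    split_ifs with h
    · rw [hR.pr_one, if_pos h]
    · rw [map_zero]
  · intro x y hx hy n
    rw [map_add, map_add, hx, hy]
  · intro c x hx n
    rw [map_smul, map_smul, hx]
  · intro j x hx n
    rw [hR.pr_e_mul, hR.pr_e_mul, hx]
  · intro a x hx n
    rw [hR.pr_ar_mul, hR.pr_ar_mul, hx]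
  · intro x hx n
    rw [hR.pr_z_mul, hR.pr_z_mul, hx]

lemma pr_of_neg (n : ℤ) (hn : n < 0) : hR.pr n = 0 := by
  ext x
  revert n
  refine hR.induction (fun x => ∀ n, n < 0 → hR.pr n x = 0) ?_ ?_ ?_ ?_ ?_ ?_ x
  · intro n hn
    rw [hR.pr_one, if_neg hn.ne]
  · intro x y hx hy n hn
    rw [map_add, hx n hn, hy n hn, add_zero]
  · intro c x hx n hn
    rw [map_smul, hx n hn, smul_zero]
  · intro j x hx n hn
    rw [hR.pr_e_mul, hx n hn, mul_zero]
  · intro a x hx n hn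
    rw [hR.pr_ar_mul, hx _ (by omega), mul_zero]
  · intro x hx n hn
    rw [hR.pr_z_mul, hx _ (by omega), mul_zero]

/-- The grading of the quiver Heisenberg algebra. -/
noncomputable def grading : QuiverGrading k Q A where
  e := R.e
  ar := R.ar
  pr := hR.pr
  e_mul_self := R.e_mul_self
  e_mul_e := R.e_mul_e
  sum_e := R.sum_e
  e_mul_ar := R.e_mul_ar
  ar_mul_e := R.ar_mul_e
  pr_pr := hR.pr_pr
  pr_of_neg := hR.pr_of_neg
  pr_e := hR.pr_e
  pr_e_mul := hR.pr_e_mul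
  pr_mul_e := hR.pr_mul_e
  pr_ar_mul := hR.pr_ar_mul

lemma z_mul (x : A) : R.z * x = x * R.z := by
  refine hR.induction (fun x => R.z * x = x * R.z) ?_ ?_ ?_ ?_ ?_ ?_ x
  · rw [mul_one, one_mul]
  · intro x y hx hy
    rw [mul_add, add_mul, hx, hy]
  · intro c x hx
    rw [mul_smul_comm, hx, smul_mul_assoc]
  · intro i x hx
    rw [← mul_assoc, R.z_mul_e, mul_assoc, hx, mul_assoc]
  · intro i x hx
    rw [← mul_assoc, R.z_mul_ar, mul_assoc, hx, mul_assoc]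
  · intro x hx
    rw [hx, ← mul_assoc, hx]

end IsUniversal

end HeisenbergRep

namespace HeisenbergRep

variable {k : Type} [Field k] {Q : FinQuiver} {v : Fin Q.r → k} {A : Type} [Ring A] [Algebra k A]
  (R : HeisenbergRep v A)

/-- The element `∑ v_l e_l`. -/
def weight : A := ∑ l, v l • R.e l

lemma e_mul_weight (i : Fin Q.r) : R.e i * R.weight = v i • R.e i := by
  rw [weight, Finset.mul_sum, Finset.sum_eq_single i]
  · rw [mul_smul_comm, R.e_mul_self]
  · intro b _ hb
    rw [mul_smul_comm, R.e_mul_e _ _ hb.symm, smul_zero]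
  · simp

lemma weight_mul_e (i : Fin Q.r) : R.weight * R.e i = v i • R.e i := by
  rw [weight, Finset.sum_mul, Finset.sum_eq_single i]
  · rw [smul_mul_assoc, R.e_mul_self]
  · intro b _ hb
    rw [smul_mul_assoc, R.e_mul_e _ _ hb, smul_zero]
  · simp

lemma e_mul_ar_eq (i : Fin Q.r) (a : Q.DArrow) :
    R.e i * R.ar a = if dsrc a = i then R.ar a else 0 := by
  split_ifs with h
  · rw [← h, R.e_mul_ar]
  · rw [← R.e_mul_ar, ← mul_assoc, R.e_mul_e _ _ (Ne.symm h), zero_mul]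

lemma ar_mul_e_eq (i : Fin Q.r) (a : Q.DArrow) :
    R.ar a * R.e i = if dtgt a = i then R.ar a else 0 := by
  split_ifs with h
  · rw [← h, R.ar_mul_e]
  · rw [← R.ar_mul_e, mul_assoc, R.e_mul_e _ _ h, mul_zero]

/-- The syzygies between the generators `a` and `z` of the augmentation ideal which follow from the
defining relations. -/
def syzygyMap : A × (Q.DArrow → A) × (Q.DArrow → A) →ₗ[k] (Q.DArrow → A) × A where
  toFun s := (fun a => dsign k a • (R.ar a.swap * s.1) + R.z * s.2.1 a
      + (s.2.2 a - R.e (dtgt a) * s.2.2 a),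
    -(R.weight * s.1) - ∑ a, R.ar a * s.2.1 a)
  map_add' s t := by
    ext
    · simp only [Prod.fst_add, Prod.snd_add, Pi.add_apply, mul_add, smul_add]
      abel
    · simp only [Prod.fst_add, Prod.snd_add, Pi.add_apply, mul_add, Finset.sum_add_distrib]
      abel
  map_smul' c s := by
    ext
    · simp only [Prod.smul_fst, Prod.smul_snd, Pi.smul_apply, mul_smul_comm, smul_add, smul_sub,
        RingHom.id_apply, smul_comm c (dsign k _)]
    · simp only [Prod.smul_fst, Prod.smul_snd, Pi.smul_apply, mul_smul_comm, smul_sub, smul_neg,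
        RingHom.id_apply, Finset.smul_sum]

/-- The submodule of syzygies. -/
abbrev syzygies : Submodule k ((Q.DArrow → A) × A) := LinearMap.range R.syzygyMap

/-- The map `(y, u) ↦ ∑ a y_a + z u`. -/
def genMap : (Q.DArrow → A) × A →ₗ[k] A where
  toFun s := ∑ a, R.ar a * s.1 a + R.z * s.2
  map_add' s t := by
    simp only [Prod.fst_add, Prod.snd_add, Pi.add_apply, mul_add, Finset.sum_add_distrib]
    abel
  map_smul' c s := by
    simp only [Prod.smul_fst, Prod.smul_snd, Pi.smul_apply, mul_smul_comm, smul_add,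
      RingHom.id_apply, Finset.smul_sum]

lemma genMap_apply (s : (Q.DArrow → A) × A) :
    R.genMap s = ∑ a, R.ar a * s.1 a + R.z * s.2 := rfl

lemma syzygies_le : R.syzygies ≤ LinearMap.ker R.genMap := by
  rintro _ ⟨⟨p, x, w⟩, rfl⟩
  rw [LinearMap.mem_ker, genMap_apply]
  have h : ∀ a, R.ar a * (w a - R.e (dtgt a) * w a) = 0 := fun a => by
    rw [mul_sub, ← mul_assoc, R.ar_mul_e, sub_self]
  have hz : ∀ a, R.ar a * (R.z * x a) = R.z * (R.ar a * x a) := fun a => by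
    rw [← mul_assoc, ← R.z_mul_ar, mul_assoc]
  have hm := congrArg (· * p) R.mesh
  simp only [Finset.sum_mul, smul_mul_assoc, mul_assoc] at hm
  simp only [syzygyMap, LinearMap.coe_mk, AddHom.coe_mk, mul_add, h, add_zero, hz,
    Finset.sum_add_distrib, mul_smul_comm, hm, mul_sub, mul_neg, Finset.mul_sum, Finset.sum_mul,
    smul_mul_assoc, weight]
  abel

/-- The action of `e i` on pairs `(y, u)`. -/
def vertMap (i : Fin Q.r) : (Q.DArrow → A) × A →ₗ[k] (Q.DArrow → A) × A where
  toFun s := (fun a => if dsrc a = i then s.1 a else 0, R.e i * s.2)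
  map_add' s t := by
    ext a
    · by_cases h : dsrc a = i <;> simp [h]
    · simp [mul_add]
  map_smul' c s := by
    ext a
    · by_cases h : dsrc a = i <;> simp [h]
    · simp

lemma genMap_vertMap (i : Fin Q.r) (s : (Q.DArrow → A) × A) :
    R.genMap (R.vertMap i s) = R.e i * R.genMap s := by
  simp only [genMap_apply, vertMap, LinearMap.coe_mk, AddHom.coe_mk, mul_add, Finset.mul_sum,
    ← mul_assoc, e_mul_ar_eq, R.z_mul_e]
  congr 1
  refine Finset.sum_congr rfl fun a _ => ?_
  split_ifs <;> simp

lemma syzygies_le_comap (i : Fin Q.r) : R.syzygies ≤ R.syzygies.comap (R.vertMap i) := by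
  rintro _ ⟨⟨p, x, w⟩, rfl⟩
  refine ⟨(R.e i * p, fun a => if dsrc a = i then x a else 0,
    fun a => if dsrc a = i then w a else 0), ?_⟩
  ext a
  · simp only [syzygyMap, vertMap, LinearMap.coe_mk, AddHom.coe_mk, ← mul_assoc, ar_mul_e_eq,
      dtgt_swap]
    split_ifs <;> simp
  · simp only [syzygyMap, vertMap, LinearMap.coe_mk, AddHom.coe_mk, ← mul_assoc, weight_mul_e,
      mul_sub, mul_neg, e_mul_weight, Finset.mul_sum, e_mul_ar_eq]
    congr 1
    refine Finset.sum_congr rfl fun a _ => ?_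
    split_ifs <;> simp

/-- The module on which the quiver Heisenberg algebra acts as on its left regular module. -/
abbrev Model : Type := (Fin Q.r → k) × (((Q.DArrow → A) × A) ⧸ R.syzygies)

/-- The comparison map from the model to the algebra. -/
def modelMap : R.Model →ₗ[k] A :=
  (∑ l, (LinearMap.toSpanSingleton k A (R.e l)).comp (LinearMap.proj l)).coprod
    (R.syzygies.liftQ R.genMap R.syzygies_le)

lemma modelMap_mk (c : Fin Q.r → k) (s : (Q.DArrow → A) × A) :
    R.modelMap (c, Submodule.Quotient.mk s) = ∑ l, c l • R.e l + R.genMap s := by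
  simp [modelMap, LinearMap.sum_apply]

/-- The action of `e i` on the model. -/
def modelE (i : Fin Q.r) : Module.End k R.Model :=
  LinearMap.prodMap ((LinearMap.single k (fun _ => k) i).comp (LinearMap.proj i))
    (R.syzygies.mapQ R.syzygies (R.vertMap i) (R.syzygies_le_comap i))

lemma modelE_mk (i : Fin Q.r) (c : Fin Q.r → k) (s : (Q.DArrow → A) × A) :
    R.modelE i (c, Submodule.Quotient.mk s)
      = (Pi.single i (c i), Submodule.Quotient.mk (R.vertMap i s)) := rfl

/-- The action of `z` on the model. -/
def modelZ : Module.End k R.Model :=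
  LinearMap.inr k _ _ ∘ₗ R.syzygies.mkQ ∘ₗ LinearMap.inr k _ _ ∘ₗ R.modelMap

lemma modelZ_apply (t : R.Model) :
    R.modelZ t = (0, Submodule.Quotient.mk (0, R.modelMap t)) := rfl

open scoped Classical in
/-- The action of an arrow on the model. -/
noncomputable def modelAr (a : Q.DArrow) : Module.End k R.Model :=
  LinearMap.inr k _ _ ∘ₗ R.syzygies.mkQ ∘ₗ LinearMap.inl k _ _ ∘ₗ
    LinearMap.single k (fun _ => A) a ∘ₗ R.modelMap

open scoped Classical in
lemma modelAr_apply (a : Q.DArrow) (t : R.Model) :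
    R.modelAr a t = (0, Submodule.Quotient.mk (Pi.single a (R.modelMap t), 0)) := rfl

lemma modelMap_modelE (i : Fin Q.r) (t : R.Model) :
    R.modelMap (R.modelE i t) = R.e i * R.modelMap t := by
  obtain ⟨c, n⟩ := t
  induction n using Submodule.Quotient.induction_on with | H s => ?_
  rw [modelE_mk, modelMap_mk, modelMap_mk, genMap_vertMap, mul_add, Finset.mul_sum]
  congr 1
  rw [Finset.sum_eq_single i, Finset.sum_eq_single i]
  · simp [R.e_mul_self]
  · intro b _ hb
    rw [mul_smul_comm, R.e_mul_e _ _ hb.symm, smul_zero]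
  · simp
  · intro b _ hb
    simp [hb]
  · simp

lemma modelMap_modelZ (t : R.Model) : R.modelMap (R.modelZ t) = R.z * R.modelMap t := by
  rw [modelZ_apply, modelMap_mk, genMap_apply]
  simp

lemma modelMap_modelAr (a : Q.DArrow) (t : R.Model) :
    R.modelMap (R.modelAr a t) = R.ar a * R.modelMap t := by
  classical
  rw [modelAr_apply, modelMap_mk, genMap_apply]
  simp [Pi.single_apply]

lemma mk_eq_mk {s t : (Q.DArrow → A) × A} (w : A × (Q.DArrow → A) × (Q.DArrow → A))
    (h : R.syzygyMap w = s - t) :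
    (Submodule.Quotient.mk s : _ ⧸ R.syzygies) = Submodule.Quotient.mk t :=
  (Submodule.Quotient.eq _).mpr ⟨w, h⟩

lemma mk_congr {s t : (Q.DArrow → A) × A} (h : s = t) :
    (Submodule.Quotient.mk s : _ ⧸ R.syzygies) = Submodule.Quotient.mk t := congrArg _ h

/-- The model is a representation of the quiver Heisenberg algebra. -/
noncomputable def modelRep : HeisenbergRep v (Module.End k R.Model) where
  e := R.modelE
  ar := R.modelAr
  z := R.modelZ
  e_mul_self i := by
    refine LinearMap.ext fun ⟨c, n⟩ => ?_
    induction n using Submodule.Quotient.induction_on with | H s => ?_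
    rw [Module.End.mul_apply, modelE_mk, modelE_mk]
    refine Prod.ext (by simp) (R.mk_congr ?_)
    ext a
    · by_cases h : dsrc a = i <;> simp [vertMap, h]
    · simp [vertMap, ← mul_assoc, R.e_mul_self]
  e_mul_e i j h := by
    refine LinearMap.ext fun ⟨c, n⟩ => ?_
    induction n using Submodule.Quotient.induction_on with | H s => ?_
    rw [Module.End.mul_apply, modelE_mk, modelE_mk]
    refine Prod.ext (by simp [h]) ((R.mk_congr ?_).trans (Submodule.Quotient.mk_zero _))
    ext a
    · by_cases h' : dsrc a = i <;> simp [vertMap, h', h]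
    · simp [vertMap, ← mul_assoc, R.e_mul_e i j h]
  sum_e := by
    refine LinearMap.ext fun ⟨c, n⟩ => ?_
    induction n using Submodule.Quotient.induction_on with | H s => ?_
    rw [LinearMap.sum_apply]
    simp only [modelE_mk]
    refine Prod.ext ?_ ?_
    · rw [Prod.fst_sum]
      exact Finset.univ_sum_single c
    · rw [Prod.snd_sum]
      refine (map_sum R.syzygies.mkQ _ _).symm.trans (R.mk_congr ?_)
      ext a
      · simp [vertMap, Prod.fst_sum]
      · simp [vertMap, Prod.snd_sum, ← Finset.sum_mul, R.sum_e]
  e_mul_ar a := by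
    classical
    refine LinearMap.ext fun t => ?_
    rw [Module.End.mul_apply, modelAr_apply, modelE_mk]
    refine Prod.ext (by simp) (R.mk_congr ?_)
    ext b
    · by_cases h : b = a
      · subst h
        simp [vertMap]
      · simp [vertMap, h]
    · simp [vertMap]
  ar_mul_e a := by
    classical
    refine LinearMap.ext fun t => ?_
    rw [Module.End.mul_apply, modelAr_apply, modelAr_apply, modelMap_modelE]
    refine Prod.ext rfl (R.mk_eq_mk (0, 0, -Pi.single a (R.modelMap t)) ?_)
    ext b
    · by_cases h : b = a
      · subst h
        simp [syzygyMap, sub_eq_neg_add, add_comm]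
      · simp [syzygyMap, h]
    · simp [syzygyMap]
  z_mul_e i := by
    refine LinearMap.ext fun t => ?_
    rw [Module.End.mul_apply, Module.End.mul_apply, modelZ_apply, modelZ_apply, modelMap_modelE,
      modelE_mk]
    refine Prod.ext (by simp) (R.mk_congr ?_)
    ext a <;> simp [vertMap]
  z_mul_ar a := by
    classical
    refine LinearMap.ext fun t => ?_
    rw [Module.End.mul_apply, Module.End.mul_apply, modelZ_apply, R.modelAr_apply a (R.modelZ t),
      modelMap_modelZ, modelMap_modelAr]
    refine Prod.ext rfl (R.mk_eq_mk (0, -Pi.single a (R.modelMap t), 0) ?_)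
    ext b
    · by_cases h : b = a
      · subst h
        simp [syzygyMap]
      · simp [syzygyMap, h]
    · simp [syzygyMap, Pi.single_apply, -Fintype.sum_sum_type]
  mesh := by
    classical
    refine LinearMap.ext fun t => ?_
    have h1 : R.modelMap ((∑ l, v l • R.modelE l) t) = R.weight * R.modelMap t := by
      simp [LinearMap.sum_apply, modelMap_modelE, weight, Finset.sum_mul]
    rw [Module.End.mul_apply, modelZ_apply, h1, LinearMap.sum_apply]
    simp only [LinearMap.smul_apply, Module.End.mul_apply, R.modelAr_apply _ (R.modelAr _ t),
      modelMap_modelAr]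
    refine Prod.ext ?_ ?_
    · simp [Prod.fst_sum]
    · rw [Prod.snd_sum]
      simp only [Prod.smul_snd, ← Submodule.Quotient.mk_smul]
      refine (map_sum R.syzygies.mkQ _ _).symm.trans (R.mk_eq_mk (R.modelMap t, 0, 0) ?_)
      ext a
      · simp [syzygyMap, Prod.fst_sum, Finset.sum_apply, Pi.single_apply, -Fintype.sum_sum_type]
      · simp [syzygyMap, Prod.snd_sum]

namespace IsUniversal

variable {R} (hR : R.IsUniversal)
include hR

lemma exists_model_section : ∃ f : A →ₗ[k] R.Model,
    (∀ x, R.modelMap (f x) = x) ∧ ∀ t, f (R.modelMap t) = t := by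
  obtain ⟨f, hfe, hfa, hfz⟩ := hR.lift R.modelRep
  have h : ∀ x t, R.modelMap (f x t) = x * R.modelMap t := by
    intro x
    refine hR.induction (fun x => ∀ t, R.modelMap (f x t) = x * R.modelMap t)
      ?_ ?_ ?_ ?_ ?_ ?_ x
    · intro t
      rw [map_one, Module.End.one_apply, one_mul]
    · intro x y hx hy t
      rw [map_add, LinearMap.add_apply, map_add, hx, hy, add_mul]
    · intro c x hx t
      rw [map_smul, LinearMap.smul_apply, map_smul, hx, smul_mul_assoc]
    · intro i x hx t
      rw [map_mul, hfe, Module.End.mul_apply, mul_assoc, ← hx]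
      exact R.modelMap_modelE i _
    · intro a x hx t
      rw [map_mul, hfa, Module.End.mul_apply, mul_assoc, ← hx]
      exact R.modelMap_modelAr a _
    · intro x hx t
      rw [map_mul, hfz, Module.End.mul_apply, mul_assoc, ← hx]
      exact R.modelMap_modelZ _
  let t₀ : R.Model := (1, Submodule.Quotient.mk 0)
  have ht₀ : R.modelMap t₀ = 1 := by
    rw [modelMap_mk, map_zero, add_zero]
    simpa using R.sum_e
  have hs : ∀ x, R.modelMap (f x t₀) = x := fun x => by rw [h, ht₀, mul_one]
  refine ⟨LinearMap.applyₗ t₀ ∘ₗ f.toLinearMap, hs, ?_⟩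
  rintro ⟨c, n⟩
  induction n using Submodule.Quotient.induction_on with | H s => ?_
  show f (R.modelMap _) t₀ = _
  classical
  rw [modelMap_mk, genMap_apply]
  simp only [map_add, map_sum, map_smul, map_mul, hfe, hfa, hfz, LinearMap.add_apply,
    LinearMap.sum_apply, LinearMap.smul_apply, Module.End.mul_apply]
  have e1 : ∀ l, c l • R.modelE l t₀ = (Pi.single l (c l), 0) := fun l => by
    rw [modelE_mk, map_zero]
    ext <;> simp [Pi.single_apply]
  have e2 : ∀ a, R.modelAr a (f (s.1 a) t₀) = (0, Submodule.Quotient.mk (Pi.single a (s.1 a), 0)) :=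
    fun a => by rw [R.modelAr_apply, hs]
  have e3 : R.modelZ (f s.2 t₀) = (0, Submodule.Quotient.mk (0, s.2)) := by
    rw [R.modelZ_apply, hs]
  simp only [modelRep, e1, e2, e3]
  refine Prod.ext ?_ ?_
  · simp only [Prod.fst_add, Prod.fst_sum, Finset.sum_const_zero, add_zero]
    exact Finset.univ_sum_single c
  · simp only [Prod.snd_add, Prod.snd_sum, Finset.sum_const_zero, zero_add]
    have h' := map_sum R.syzygies.mkQ
      (fun a => ((Pi.single a (s.1 a), 0) : (Q.DArrow → A) × A)) Finset.univ
    refine ((congrArg (· + _) h'.symm).trans (map_add R.syzygies.mkQ _ _).symm).trans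
      (R.mk_congr (Prod.ext ?_ ?_))
    · rw [Prod.fst_add, Prod.fst_sum, add_zero]
      exact Finset.univ_sum_single s.1
    · simp [Prod.snd_sum]

theorem generates (x : A) : ∃ (c : Fin Q.r → k) (y : Q.DArrow → A) (u : A),
    x = ∑ l, c l • R.e l + ∑ a, R.ar a * y a + R.z * u := by
  obtain ⟨f, hf, -⟩ := hR.exists_model_section
  obtain ⟨⟨c, n⟩, h⟩ : ∃ t, f x = t := ⟨_, rfl⟩
  induction n using Submodule.Quotient.induction_on with | H s => ?_
  refine ⟨c, s.1, s.2, ?_⟩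
  rw [← hf x, h, modelMap_mk, genMap_apply, add_assoc]

theorem exact {c : Fin Q.r → k} {y : Q.DArrow → A} {u : A} (hy : ∀ a, R.e (dtgt a) * y a = y a)
    (h : ∑ l, c l • R.e l + ∑ a, R.ar a * y a + R.z * u = 0) :
    c = 0 ∧ ∃ (p : A) (x : Q.DArrow → A), (∀ a, R.e (dtgt a) * x a = x a) ∧
      (∀ a, y a = dsign k a • (R.ar a.swap * p) + R.z * x a) ∧
      u = -(R.weight * p) - ∑ a, R.ar a * x a := by
  obtain ⟨f, -, hf⟩ := hR.exists_model_section
  have h0 : (c, Submodule.Quotient.mk (y, u)) = (0 : R.Model) := by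
    rw [← hf (c, Submodule.Quotient.mk (y, u)), modelMap_mk, genMap_apply, ← add_assoc, h,
      map_zero]
  obtain ⟨h1, h2⟩ := Prod.mk.inj h0
  obtain ⟨⟨p, x, w⟩, h3⟩ := (Submodule.Quotient.mk_eq_zero _).mp h2
  obtain ⟨h4, h5⟩ := Prod.mk.inj h3
  refine ⟨h1, p, fun a => R.e (dtgt a) * x a, fun a => ?_, fun a => ?_, ?_⟩
  · rw [← mul_assoc, R.e_mul_self]
  · have ha : R.e (dtgt a) * R.ar a.swap = R.ar a.swap := by
      rw [← dsrc_swap, R.e_mul_ar]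
    rw [← hy, ← congrFun h4 a, mul_add, mul_add, mul_sub, ← mul_assoc _ (R.e _), R.e_mul_self,
      sub_self, add_zero, mul_smul_comm, ← mul_assoc, ha, ← mul_assoc, ← R.z_mul_e, mul_assoc]
  · rw [← h5]
    simp only [← mul_assoc, R.ar_mul_e]

end IsUniversal

end HeisenbergRep

namespace HeisenbergRep

open MulOpposite

variable {k : Type} [Field k] {Q : FinQuiver} {v : Fin Q.r → k} {A : Type} [Ring A] [Algebra k A]
  (R : HeisenbergRep v A)

/-- The opposite representation, in which every arrow is exchanged with its reverse. -/
def opposite : HeisenbergRep v Aᵐᵒᵖ where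
  e i := op (R.e i)
  ar a := op (R.ar a.swap)
  z := op R.z
  e_mul_self i := by rw [← op_mul, R.e_mul_self]
  e_mul_e i j h := by rw [← op_mul, R.e_mul_e j i h.symm, op_zero]
  sum_e := by rw [← Finset.op_sum, R.sum_e, op_one]
  e_mul_ar a := by rw [← op_mul, ← dtgt_swap, R.ar_mul_e]
  ar_mul_e a := by rw [← op_mul, ← dsrc_swap, R.e_mul_ar]
  z_mul_e i := by rw [← op_mul, ← op_mul, R.z_mul_e]
  z_mul_ar a := by rw [← op_mul, ← op_mul, R.z_mul_ar]
  mesh := by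
    apply unop_injective
    simp only [Sum.swap_swap, unop_mul, unop_op, unop_smul, Finset.unop_sum]
    rw [R.mesh, Finset.mul_sum, Finset.sum_mul]
    simp only [mul_smul_comm, smul_mul_assoc, R.z_mul_e]

namespace IsUniversal

variable {R} (hR : R.IsUniversal)
include hR

lemma exists_mul_of_reverse (w : List Q.DArrow) (i : Fin Q.r)
    (h : ∃ u, R.e i * (w.map R.ar).prod = R.z * u) :
    ∃ u, ((w.map Sum.swap).reverse.map R.ar).prod * R.e i = R.z * u := by
  obtain ⟨f, hfe, hfa, hfz⟩ := hR.lift R.opposite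
  have hw : ∀ w : List Q.DArrow,
      f (w.map R.ar).prod = op ((w.map Sum.swap).reverse.map R.ar).prod := by
    intro w
    induction w with
    | nil => simp
    | cons a w ih =>
      rw [List.map_cons, List.prod_cons, map_mul, ih, hfa]
      simp [opposite]
  obtain ⟨u, hu⟩ := h
  refine ⟨unop (f u), ?_⟩
  have h1 := congrArg (fun x => unop (f x)) hu
  simp only [map_mul, hfe, hfz, hw, unop_mul] at h1
  rw [hR.z_mul]
  exact h1

lemma finiteDimensional_corner (n : ℤ) (i j : Fin Q.r) :
    FiniteDimensional k (hR.grading.corner n i j) := by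
  suffices h : ∀ (m : ℕ) (n : ℤ), n < m → ∀ i j,
      FiniteDimensional k (hR.grading.corner n i j) from
    h (n.toNat + 1) n (by omega) i j
  intro m
  induction m with
  | zero =>
    intro n hn i j
    rw [QuiverGrading.corner_of_neg (by simpa using hn)]
    infer_instance
  | succ m ih =>
    intro n hn i j
    have hfin₁ := fun a : Q.DArrow => ih (n - 1) (by push_cast at hn; omega) (dtgt a) j
    have hfin₂ := ih (n - 2) (by push_cast at hn; omega) i j
    have hfin₃ : FiniteDimensional k
        (Submodule.span k (Set.range fun l => R.e i * R.e l * R.e j)) :=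
      FiniteDimensional.span_of_finite k (Set.finite_range _)
    let W : Submodule k A := Submodule.span k (Set.range fun l => R.e i * R.e l * R.e j)
      ⊔ (⨆ a : Q.DArrow, (hR.grading.corner (n - 1) (dtgt a) j).map
          (LinearMap.mulLeft k (R.e i * R.ar a)))
      ⊔ (hR.grading.corner (n - 2) i j).map (LinearMap.mulLeft k R.z)
    have hW : FiniteDimensional k W := by
      dsimp only [W]
      infer_instance
    refine Submodule.finiteDimensional_of_le (S₂ := W) fun x hx => ?_
    obtain ⟨c, y, u, h⟩ := hR.generates x
    have h1 : x = ∑ l, c l • (R.e i * hR.pr n (R.e l) * R.e j)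
        + ∑ a, (R.e i * R.ar a) * (R.e (dtgt a) * hR.pr (n - 1) (y a) * R.e j)
        + R.z * (R.e i * hR.pr (n - 2) u * R.e j) := by
      have h2 : R.e i * hR.pr n x * R.e j = x :=
        (congrArg (fun b => R.e i * b * R.e j) hx.1).trans
          ((congrArg (· * R.e j) hx.2.1).trans hx.2.2)
      conv_lhs => rw [← h2, h]
      simp only [map_add, map_sum, map_smul, hR.pr_ar_mul, hR.pr_z_mul, mul_add, add_mul,
        Finset.mul_sum, Finset.sum_mul, mul_smul_comm, smul_mul_assoc, ← mul_assoc, R.z_mul_e]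
      simp only [mul_assoc _ (R.ar _) (R.e _), R.ar_mul_e]
    rw [h1]
    refine Submodule.add_mem _ (Submodule.add_mem _ ?_ ?_) ?_
    · refine Submodule.sum_mem _ fun l _ => Submodule.smul_mem _ _ ?_
      rw [hR.pr_e]
      split_ifs
      · exact Submodule.mem_sup_left (Submodule.mem_sup_left (Submodule.subset_span ⟨l, rfl⟩))
      · simp
    · refine Submodule.sum_mem _ fun a _ => Submodule.mem_sup_left (Submodule.mem_sup_right ?_)
      exact Submodule.mem_iSup_of_mem a
        (Submodule.mem_map_of_mem (QuiverGrading.pr_mem_corner (G := hR.grading) _ _ _ _))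
    · exact Submodule.mem_sup_right
        (Submodule.mem_map_of_mem (QuiverGrading.pr_mem_corner (G := hR.grading) _ _ _ _))

end IsUniversal

/-- A surjection of algebras whose kernel is the ideal generated by the central variable. -/
structure IsCentralQuotient {B : Type} [Ring B] [Algebra k B] (q : A →ₐ[k] B) : Prop where
  surjective : Function.Surjective q
  map_eq_zero_iff : ∀ x, q x = 0 ↔ ∃ u, x = R.z * u

variable {R} in
lemma IsCentralQuotient.map_z {B : Type} [Ring B] [Algebra k B] {q : A →ₐ[k] B}
    (hq : R.IsCentralQuotient q) : q R.z = 0 :=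
  (hq.map_eq_zero_iff _).mpr ⟨1, (mul_one _).symm⟩

namespace IsUniversal

variable {R} (hR : R.IsUniversal)

include hR in
theorem exists_isCentralQuotient :
    ∃ (B : Type) (_ : Ring B) (_ : Algebra k B) (q : A →ₐ[k] B), R.IsCentralQuotient q := by
  have h : (Ideal.span {R.z}).IsTwoSided := by
    refine ⟨fun {a} b ha => ?_⟩
    obtain ⟨c, rfl⟩ := Ideal.mem_span_singleton'.mp ha
    rw [mul_assoc, hR.z_mul, ← mul_assoc]
    exact Ideal.mem_span_singleton'.mpr ⟨_, rfl⟩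
  refine ⟨A ⧸ Ideal.span {R.z}, inferInstance, inferInstance, Ideal.Quotient.mkₐ k _,
    Ideal.Quotient.mkₐ_surjective k _, fun x => ?_⟩
  rw [Ideal.Quotient.mkₐ_eq_mk, Ideal.Quotient.eq_zero_iff_mem, Ideal.mem_span_singleton']
  simp only [hR.z_mul, eq_comm]

variable {B : Type} [Ring B] [Algebra k B] {q : A →ₐ[k] B} (hq : R.IsCentralQuotient q)
include hq

lemma exists_quotient_pr : ∃ pr : ℤ → B →ₗ[k] B, ∀ n x, pr n (q x) = q (hR.pr n x) := by
  obtain ⟨s, hs⟩ := q.toLinearMap.exists_rightInverse_of_surjective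
    (LinearMap.range_eq_top.mpr hq.surjective)
  refine ⟨fun n => q.toLinearMap ∘ₗ hR.pr n ∘ₗ s, fun n x => ?_⟩
  have h1 : q (s (q x) - x) = 0 := by
    rw [map_sub, sub_eq_zero]
    exact LinearMap.congr_fun hs (q x)
  obtain ⟨u, hu⟩ := (hq.map_eq_zero_iff _).mp h1
  have h2 : q (hR.pr n (s (q x) - x)) = 0 := by
    rw [hu, hR.pr_z_mul]
    exact (hq.map_eq_zero_iff _).mpr ⟨_, rfl⟩
  rw [map_sub, map_sub, sub_eq_zero] at h2
  exact h2

/-- The homogeneous projections of the quotient by the central variable. -/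
noncomputable def quotientPr : ℤ → B →ₗ[k] B := (hR.exists_quotient_pr hq).choose

lemma quotientPr_apply (n : ℤ) (x : A) : hR.quotientPr hq n (q x) = q (hR.pr n x) :=
  (hR.exists_quotient_pr hq).choose_spec n x

/-- The grading of the quotient by the central variable. -/
noncomputable def quotientGrading : QuiverGrading k Q B where
  e i := q (R.e i)
  ar a := q (R.ar a)
  pr := hR.quotientPr hq
  e_mul_self i := by rw [← map_mul, R.e_mul_self]
  e_mul_e i j h := by rw [← map_mul, R.e_mul_e i j h, map_zero]
  sum_e := by rw [← map_sum, R.sum_e, map_one]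
  e_mul_ar a := by rw [← map_mul, R.e_mul_ar]
  ar_mul_e a := by rw [← map_mul, R.ar_mul_e]
  pr_pr n := hq.surjective.forall.mpr fun x => by simp only [hR.quotientPr_apply hq, hR.pr_pr]
  pr_of_neg n hn := by
    ext x
    obtain ⟨x, rfl⟩ := hq.surjective x
    rw [hR.quotientPr_apply hq, hR.pr_of_neg n hn, LinearMap.zero_apply, map_zero,
      LinearMap.zero_apply]
  pr_e n i := by rw [hR.quotientPr_apply hq, hR.pr_e, apply_ite q, map_zero]
  pr_e_mul n i := hq.surjective.forall.mpr fun x => by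
    rw [← map_mul, hR.quotientPr_apply hq, hR.quotientPr_apply hq, hR.pr_e_mul, map_mul]
  pr_mul_e n := hq.surjective.forall.mpr fun x i => by
    rw [← map_mul, hR.quotientPr_apply hq, hR.quotientPr_apply hq, hR.pr_mul_e, map_mul]
  pr_ar_mul n a := hq.surjective.forall.mpr fun x => by
    rw [← map_mul, hR.quotientPr_apply hq, hR.quotientPr_apply hq, hR.pr_ar_mul, map_mul]

/-- The map induced by the quotient on the spaces `e_i A_n e_j`. -/
noncomputable def cornerMap (n : ℤ) (i j : Fin Q.r) :
    hR.grading.corner n i j →ₗ[k] (hR.quotientGrading hq).corner n i j :=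
  q.toLinearMap.restrict fun x hx =>
    ⟨(hR.quotientPr_apply hq n x).trans (congrArg q hx.1),
      (map_mul q _ _).symm.trans (congrArg q hx.2.1),
      (map_mul q _ _).symm.trans (congrArg q hx.2.2)⟩

lemma cornerMap_surjective (n : ℤ) (i j : Fin Q.r) :
    Function.Surjective (hR.cornerMap hq n i j) := by
  rintro ⟨y, hy⟩
  obtain ⟨x, rfl⟩ := hq.surjective y
  refine ⟨⟨_, QuiverGrading.pr_mem_corner (G := hR.grading) n i j x⟩, Subtype.ext ?_⟩
  show q (R.e i * hR.pr n x * R.e j) = q x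
  rw [map_mul, map_mul, ← hR.quotientPr_apply hq]
  exact (congrArg (fun b => q (R.e i) * b * q (R.e j)) hy.1).trans
    ((congrArg (· * q (R.e j)) hy.2.1).trans hy.2.2)

theorem isPreprojective_quotientGrading : (hR.quotientGrading hq).IsPreprojective where
  finite n i j := by
    have := hR.finiteDimensional_corner n i j
    exact Module.Finite.of_surjective _ (hR.cornerMap_surjective hq n i j)
  mesh := by
    have h := congrArg q R.mesh
    rw [map_mul, hq.map_z, zero_mul, map_sum] at h
    simp only [map_smul, map_mul] at h
    exact h
  generates := hq.surjective.forall.mpr fun x => by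
    obtain ⟨c, y, u, rfl⟩ := hR.generates x
    refine ⟨c, fun a => q (y a), ?_⟩
    rw [map_add, map_mul q R.z, hq.map_z, zero_mul, add_zero]
    simp only [map_add, map_sum, map_smul, map_mul]
    rfl
  exact c y hy h := by
    choose y' hy' using fun a => hq.surjective (y a)
    have hqy : ∀ a, q (R.e (dtgt a) * y' a) = y a := fun a => by
      rw [map_mul, hy']
      exact hy a
    have h1 : q (∑ l, c l • R.e l + ∑ a, R.ar a * (R.e (dtgt a) * y' a)) = 0 := by
      simp only [map_add, map_sum, map_smul, map_mul q (R.ar _), hqy]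
      exact h
    obtain ⟨u, hu⟩ := (hq.map_eq_zero_iff _).mp h1
    have h2 := hR.exact (c := c) (y := fun a => R.e (dtgt a) * y' a) (u := -u)
      (fun a => by rw [← mul_assoc, R.e_mul_self]) (by rw [hu, mul_neg, add_neg_cancel])
    obtain ⟨hc, p, x, -, hp, -⟩ := h2
    refine ⟨hc, q p, fun a => ?_⟩
    rw [← hqy, hp, map_add, map_mul q R.z, hq.map_z, zero_mul, add_zero, map_smul, map_mul]
    rfl
  reverse w i h := by
    have hword : ∀ w : List Q.DArrow,
        (w.map (hR.quotientGrading hq).ar).prod = q (w.map R.ar).prod := fun w => by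
      rw [map_list_prod, List.map_map]
      rfl
    rw [hword] at h ⊢
    have h1 := (hq.map_eq_zero_iff _).mp ((map_mul q (R.e i) _).trans h)
    exact (map_mul q _ _).symm.trans
      ((hq.map_eq_zero_iff _).mpr (hR.exists_mul_of_reverse w i h1))

end IsUniversal

end HeisenbergRep

namespace HeisenbergRep.IsUniversal

variable {k : Type} [Field k] {Q : FinQuiver} {v : Fin Q.r → k} {A : Type} [Ring A] [Algebra k A]
  {R : HeisenbergRep v A} (hR : R.IsUniversal)

lemma z_mul_mem {m n : ℤ} (h : m = n - 2) {i j : Fin Q.r} {x : A}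
    (hx : x ∈ hR.grading.corner m i j) : R.z * x ∈ hR.grading.corner n i j := by
  subst h
  refine ⟨(hR.pr_z_mul n x).trans (congrArg (R.z * ·) hx.1), ?_, ?_⟩
  · rw [hR.z_mul, ← mul_assoc, hx.2.1]
  · rw [mul_assoc, hx.2.2]

/-- Multiplication by the central variable. -/
noncomputable def zMap {m n : ℤ} (h : m = n - 2) (i j : Fin Q.r) :
    hR.grading.corner m i j →ₗ[k] hR.grading.corner n i j :=
  (LinearMap.mulLeft k R.z).restrict fun _ hx => hR.z_mul_mem h hx

section CentralQuotient

variable {B : Type} [Ring B] [Algebra k B] {q : A →ₐ[k] B} (hq : R.IsCentralQuotient q)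

lemma ker_cornerMap (n : ℤ) (i j : Fin Q.r) :
    LinearMap.ker (hR.cornerMap hq n i j) = LinearMap.range (hR.zMap (n := n) rfl i j) := by
  ext ⟨x, hx⟩
  rw [LinearMap.mem_ker, LinearMap.mem_range]
  constructor
  · intro h
    obtain ⟨u, rfl⟩ := (hq.map_eq_zero_iff x).mp (congrArg Subtype.val h)
    refine ⟨⟨_, QuiverGrading.pr_mem_corner (G := hR.grading) (n - 2) i j u⟩, Subtype.ext ?_⟩
    show R.z * (R.e i * hR.pr (n - 2) u * R.e j) = R.z * u
    have h1 : R.e i * hR.pr n (R.z * u) * R.e j = R.z * u :=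
      (congrArg (fun b => R.e i * b * R.e j) hx.1).trans
        ((congrArg (· * R.e j) hx.2.1).trans hx.2.2)
    rw [hR.pr_z_mul, ← mul_assoc (R.e i), ← R.z_mul_e] at h1
    simpa only [mul_assoc] using h1
  · rintro ⟨u, hu⟩
    exact Subtype.ext ((hq.map_eq_zero_iff x).mpr ⟨u, (congrArg Subtype.val hu).symm⟩)

lemma finrank_quotient_add_finrank_range (n : ℤ) (i j : Fin Q.r) :
    finrank k ((hR.quotientGrading hq).corner n i j)
      + finrank k (LinearMap.range (hR.zMap (n := n) rfl i j))
      = finrank k (hR.grading.corner n i j) := by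
  have := hR.finiteDimensional_corner n i j
  have h := (hR.cornerMap hq n i j).finrank_range_add_finrank_ker
  rwa [LinearMap.range_eq_top.mpr (hR.cornerMap_surjective hq n i j), finrank_top,
    hR.ker_cornerMap hq] at h

end CentralQuotient

section Resolution

variable (n : ℤ) (i j : Fin Q.r)

/-- The map `(y, u) ↦ ∑ a y_a + z u`. -/
noncomputable def resolutionMap₁ :
    ((a : {a : Q.DArrow // dsrc a = i}) → hR.grading.corner (n - 1) (dtgt a.1) j)
      × hR.grading.corner (n - 2) i j →ₗ[k] hR.grading.corner n i j :=
  (hR.grading.arrowMap n i j).coprod (hR.zMap rfl i j)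

/-- The map `(p, x) ↦ (± a* p + z x_a, - v_i p - ∑ a x_a)`. -/
noncomputable def resolutionMap₂ :
    hR.grading.corner (n - 2) i j
      × ((a : {a : Q.DArrow // dsrc a = i}) → hR.grading.corner (n - 2 - 1) (dtgt a.1) j) →ₗ[k]
    ((a : {a : Q.DArrow // dsrc a = i}) → hR.grading.corner (n - 1) (dtgt a.1) j)
      × hR.grading.corner (n - 2) i j :=
  ((hR.grading.meshMap n i j).coprod
      (LinearMap.pi fun a => hR.zMap (by ring) (dtgt a.1) j ∘ₗ LinearMap.proj a)).prod
    ((-(v i • LinearMap.id)).coprod (-hR.grading.arrowMap (n - 2) i j))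

/-- The map `p ↦ (z p, ∓ a* p)`. -/
noncomputable def resolutionMap₃ :
    hR.grading.corner (n - 2 - 2) i j →ₗ[k]
    hR.grading.corner (n - 2) i j
      × ((a : {a : Q.DArrow // dsrc a = i}) → hR.grading.corner (n - 2 - 1) (dtgt a.1) j) :=
  (hR.zMap rfl i j).prod (-hR.grading.meshMap (n - 2) i j)

lemma resolutionMap₂_comp_resolutionMap₃ :
    hR.resolutionMap₂ n i j ∘ₗ hR.resolutionMap₃ n i j = 0 := by
  ext p a
  · show dsign k a.1 • (R.ar a.1.swap * (R.z * p.1))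
      + R.z * (-(dsign k a.1 • (R.ar a.1.swap * p.1))) = 0
    rw [mul_neg, mul_smul_comm, ← mul_assoc, ← mul_assoc, hR.z_mul, add_neg_cancel]
  · show -(v i • (R.z * p.1))
      + -∑ a : {a : Q.DArrow // dsrc a = i}, R.ar a.1 * (-(dsign k a.1 • (R.ar a.1.swap * p.1))) = 0
    have h1 := QuiverGrading.sum_ar_mul_eq (G := hR.grading) i
      (fun a => dsign k a • (R.ar a.swap * p.1))
    have h2 := congrArg (· * p.1) (R.e_mul_mesh i)
    have h3 : R.e i * p.1 = p.1 := p.2.2.1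
    simp only [mul_neg, Finset.sum_neg_distrib, neg_neg]
    rw [smul_mul_assoc, mul_assoc R.z, h3, mul_assoc, Finset.sum_mul] at h2
    simp only [smul_mul_assoc, mul_assoc] at h2
    rw [← h2]
    refine neg_add_eq_zero.mpr (Eq.trans ?_ h1)
    simp only [mul_smul_comm]
    rfl

lemma ker_resolutionMap₁_le :
    LinearMap.ker (hR.resolutionMap₁ n i j) ≤ LinearMap.range (hR.resolutionMap₂ n i j) := by
  classical
  rintro ⟨y, u⟩ h
  have h0 : ∑ a : {a : Q.DArrow // dsrc a = i}, R.ar a.1 * (y a).1 + R.z * u.1 = 0 :=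
    congrArg Subtype.val (LinearMap.mem_ker.mp h)
  let y' : Q.DArrow → A := fun a => if h : dsrc a = i then y ⟨a, h⟩ else 0
  have hy' : ∀ a : {a : Q.DArrow // dsrc a = i}, y' a.1 = y a := fun a => dif_pos a.2
  have hsum : ∑ a, R.ar a * y' a = ∑ a : {a : Q.DArrow // dsrc a = i}, R.ar a.1 * (y a).1 := by
    rw [← Fintype.sum_subtype_add_sum_subtype (fun a => dsrc a = i),
      Finset.sum_congr rfl fun a _ => by rw [hy'],
      Finset.sum_eq_zero (s := (Finset.univ : Finset {a : Q.DArrow // ¬ dsrc a = i}))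
        fun a _ => by rw [show y' a.1 = 0 from dif_neg a.2, mul_zero], add_zero]
  obtain ⟨-, p, x, -, hp, hu⟩ := hR.exact (c := 0) (y := y') (u := u)
    (fun a => by
      dsimp only [y']
      split_ifs with h
      · exact (y ⟨a, h⟩).2.2.1
      · exact mul_zero _)
    (by simpa [hsum] using h0)
  refine ⟨(⟨_, QuiverGrading.pr_mem_corner (G := hR.grading) (n - 2) i j p⟩,
    fun a => ⟨_, QuiverGrading.pr_mem_corner (G := hR.grading) (n - 2 - 1) (dtgt a.1) j (x a.1)⟩),
    Prod.ext (funext fun a => Subtype.ext ?_) (Subtype.ext ?_)⟩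
  · show dsign k a.1 • (R.ar a.1.swap * (R.e i * hR.pr (n - 2) p * R.e j))
      + R.z * (R.e (dtgt a.1) * hR.pr (n - 2 - 1) (x a.1) * R.e j) = y a
    have ha := R.ar_mul_e a.1.swap
    rw [dtgt_swap, a.2] at ha
    have ha' : R.e (dtgt a.1) * R.ar a.1.swap = R.ar a.1.swap := by
      rw [← dsrc_swap, R.e_mul_ar]
    have h1 : R.e (dtgt a.1) * hR.pr (n - 1) (y a).1 * R.e j = y a :=
      (congrArg (fun b => R.e (dtgt a.1) * b * R.e j) (y a).2.1).trans
        ((congrArg (· * R.e j) (y a).2.2.1).trans (y a).2.2.2)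
    refine Eq.trans ?_ h1
    rw [(hy' a).symm.trans (hp a.1), map_add, map_smul, hR.pr_ar_mul, hR.pr_z_mul,
      show n - 1 - 1 = n - 2 by ring, show n - 1 - 2 = n - 2 - 1 by ring, mul_add, add_mul, mul_smul_comm, smul_mul_assoc]
    simp only [← mul_assoc, ha, ha', R.z_mul_e]
  · show -(v i • (R.e i * hR.pr (n - 2) p * R.e j))
      + -∑ a : {a : Q.DArrow // dsrc a = i},
        R.ar a.1 * (R.e (dtgt a.1) * hR.pr (n - 2 - 1) (x a.1) * R.e j) = u
    have h1 := QuiverGrading.sum_ar_mul_eq (G := hR.grading) i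
      (fun a => R.e (dtgt a) * hR.pr (n - 2 - 1) (x a) * R.e j)
    have h2 : R.e i * hR.pr (n - 2) u.1 * R.e j = u :=
      (congrArg (fun b => R.e i * b * R.e j) u.2.1).trans
        ((congrArg (· * R.e j) u.2.2.1).trans u.2.2.2)
    have h3 : hR.pr (n - 2) (R.weight * p) = R.weight * hR.pr (n - 2) p := by
      simp only [weight, Finset.sum_mul, smul_mul_assoc, map_sum, map_smul, hR.pr_e_mul]
    refine (sub_eq_add_neg _ _).symm.trans (Eq.trans ?_ h2)
    rw [hu, map_sub, map_neg, map_sum, h3, mul_sub, sub_mul, mul_neg, neg_mul, ← mul_assoc (R.e i),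
      e_mul_weight, smul_mul_assoc, smul_mul_assoc]
    congr 1
    refine h1.symm.trans ?_
    simp only [hR.pr_ar_mul, mul_assoc, Finset.sum_mul]
    refine congrArg (R.e i * ·) (Finset.sum_congr rfl fun a _ => ?_)
    show R.ar a * (R.e (dtgt a) * (hR.pr (n - 2 - 1) (x a) * R.e j)) = _
    rw [← mul_assoc, R.ar_mul_e]

lemma finrank_resolution_le (hz : Function.Injective (hR.zMap (n := n - 2) rfl i j)) :
    ∑ a : {a : Q.DArrow // dsrc a = i}, finrank k (hR.grading.corner (n - 1) (dtgt a.1) j)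
        + finrank k (hR.grading.corner (n - 2 - 2) i j)
      ≤ finrank k (hR.grading.corner n i j)
        + ∑ a : {a : Q.DArrow // dsrc a = i},
          finrank k (hR.grading.corner (n - 1 - 2) (dtgt a.1) j) := by
  have := hR.finiteDimensional_corner
  have h := finrank_add_finrank_le_of_exact _ _ _ (hR.ker_resolutionMap₁_le n i j)
    (hR.resolutionMap₂_comp_resolutionMap₃ n i j) fun x y hxy => hz (Prod.ext_iff.mp hxy).1
  rw [finrank_prod, finrank_prod, finrank_pi_fintype, finrank_pi_fintype] at h
  rw [show n - 1 - 2 = n - 2 - 1 by ring]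
  omega

end Resolution

theorem finrank_corner_eq_add {B : Type} [Ring B] [Algebra k B] {q : A →ₐ[k] B}
    (hq : R.IsCentralQuotient q) (hconn : Q.Connected) (hnd : ¬ Q.IsDynkin) (n : ℤ)
    (i j : Fin Q.r) :
    finrank k (hR.grading.corner n i j)
      = finrank k ((hR.quotientGrading hq).corner n i j)
        + finrank k (hR.grading.corner (n - 2) i j) := by
  suffices h : ∀ (m : ℕ) (n : ℤ), n < m → ∀ i j, finrank k (hR.grading.corner n i j)
      = finrank k ((hR.quotientGrading hq).corner n i j)
        + finrank k (hR.grading.corner (n - 2) i j) from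
    h (n.toNat + 1) n (by omega) i j
  intro m
  induction m with
  | zero =>
    intro n hn i j
    have hn : n < 0 := by simpa using hn
    rw [QuiverGrading.corner_of_neg hn, QuiverGrading.corner_of_neg hn,
      QuiverGrading.corner_of_neg (show n - 2 < 0 by omega), finrank_bot, finrank_bot]
  | succ m ih =>
    intro n hn i j
    push_cast at hn
    have := hR.finiteDimensional_corner
    have h₀ := hR.finrank_quotient_add_finrank_range hq n i j
    have hle := (hR.zMap (n := n) rfl i j).finrank_range_le
    by_cases hn0 : n = 0
    · have h1 : finrank k (hR.grading.corner (n - 2) i j) = 0 := by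
        rw [QuiverGrading.corner_of_neg (by omega), finrank_bot]
      omega
    have h₁ := fun a : {a : Q.DArrow // dsrc a = i} => ih (n - 1) (by omega) (dtgt a.1) j
    have h₂ := ih (n - 2) (by omega) i j
    have hz : Function.Injective (hR.zMap (n := n - 2) rfl i j) := by
      have h3 := hR.finrank_quotient_add_finrank_range hq (n - 2) i j
      have h4 := (hR.zMap (n := n - 2) rfl i j).finrank_range_add_finrank_ker
      rw [← LinearMap.ker_eq_bot, ← Submodule.finrank_eq_zero (R := k)]
      omega
    have h₄ := hR.finrank_resolution_le n i j hz
    have h₅ := (hR.isPreprojective_quotientGrading hq).finrank_corner_eq hconn hnd n i j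
    rw [Finset.sum_congr rfl fun a _ => h₁ a, Finset.sum_add_distrib] at h₄
    simp only [hn0, false_and, if_false] at h₅
    rw [← Nat.cast_sum] at h₅
    omega

end HeisenbergRep.IsUniversal

namespace HeisenbergRep

variable {k : Type} [Field k] {Q : FinQuiver} {v : Fin Q.r → k} {A : Type} [Ring A] [Algebra k A]
  {R : HeisenbergRep v A}

namespace IsUniversal

variable (hR : R.IsUniversal)
include hR

lemma pr_gen_mul (n : ℤ) (g : QHGen Q) (x : A) :
    hR.pr n (R.gen g * x) = R.gen g * hR.pr (n - qhWt Q g) x := by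
  cases g with
  | vert i => exact (hR.pr_e_mul n i x).trans (by simp [qhWt]; rfl)
  | fwd a => exact hR.pr_ar_mul n (Sum.inl a) x
  | bwd a => exact hR.pr_ar_mul n (Sum.inr a) x
  | z => exact hR.pr_z_mul n x

lemma pr_prod_gen (l : List (QHGen Q)) :
    hR.pr (l.map (qhWt Q)).sum (l.map R.gen).prod = (l.map R.gen).prod := by
  induction l with
  | nil => simp [hR.pr_one]
  | cons g l ih =>
    simp only [List.map_cons, List.prod_cons, List.sum_cons]
    rw [hR.pr_gen_mul, Nat.cast_add, add_sub_cancel_left, ih]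

lemma pr_mem_span (x : A) : ∀ n : ℕ, hR.pr n x ∈ Submodule.span k
    {x | ∃ l : List (QHGen Q), (l.map (qhWt Q)).sum = n ∧ x = (l.map R.gen).prod} := by
  have hgen : ∀ (g : QHGen Q) (x : A), (∀ n : ℕ, hR.pr n x ∈ Submodule.span k
      {x | ∃ l : List (QHGen Q), (l.map (qhWt Q)).sum = n ∧ x = (l.map R.gen).prod}) →
      ∀ n : ℕ, hR.pr n (R.gen g * x) ∈ Submodule.span k
        {x | ∃ l : List (QHGen Q), (l.map (qhWt Q)).sum = n ∧ x = (l.map R.gen).prod} := by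
    intro g x hx n
    rw [hR.pr_gen_mul]
    rcases lt_or_ge n (qhWt Q g) with h | h
    · rw [hR.pr_of_neg _ (by omega), LinearMap.zero_apply, mul_zero]
      exact Submodule.zero_mem _
    · obtain ⟨m, rfl⟩ := Nat.exists_eq_add_of_le h
      rw [Nat.cast_add, add_sub_cancel_left]
      refine Submodule.span_induction ?_ ?_ ?_ ?_ (hx m)
      · rintro _ ⟨l, rfl, rfl⟩
        exact Submodule.subset_span ⟨g :: l, by simp, by simp⟩
      · rw [mul_zero]
        exact Submodule.zero_mem _
      · intro a b _ _ ha hb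
        rw [mul_add]
        exact Submodule.add_mem _ ha hb
      · intro c a _ ha
        rw [mul_smul_comm]
        exact Submodule.smul_mem _ c ha
  refine hR.induction _ (fun n => ?_) (fun x y hx hy n => ?_) (fun c x hx n => ?_)
    (fun i => hgen (.vert i)) (fun a => ?_) (hgen .z) x
  · rw [hR.pr_one]
    split_ifs with h
    · exact Submodule.subset_span ⟨[], by simpa using (Nat.cast_eq_zero.mp h).symm, by simp⟩
    · exact Submodule.zero_mem _
  · rw [map_add]
    exact Submodule.add_mem _ (hx n) (hy n)
  · rw [map_smul]
    exact Submodule.smul_mem _ c (hx n)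
  · cases a with
    | inl a => exact hgen (.fwd a)
    | inr a => exact hgen (.bwd a)

lemma mem_span_iff (n : ℕ) (x : A) : x ∈ Submodule.span k
    {x | ∃ l : List (QHGen Q), (l.map (qhWt Q)).sum = n ∧ x = (l.map R.gen).prod} ↔
    hR.pr n x = x := by
  refine ⟨fun h => ?_, fun h => h ▸ hR.pr_mem_span x n⟩
  refine Submodule.span_induction ?_ (map_zero _) ?_ ?_ h
  · rintro _ ⟨l, rfl, rfl⟩
    exact hR.pr_prod_gen l
  · intro a b _ _ ha hb
    rw [map_add, ha, hb]
  · intro c a _ ha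
    rw [map_smul, ha]

end IsUniversal

variable (v) in
lemma qhCorner_eq (n : ℕ) (i j : Fin Q.r) :
    qhCorner k Q v n i j = (isUniversal_taut v).grading.corner n i j := by
  have hmem : ∀ x, x ∈ qhPiece k Q v n ↔ (isUniversal_taut v).pr n x = x := fun x => by
    rw [← (isUniversal_taut v).mem_span_iff, funext (taut_gen (v := v))]
    rfl
  ext x
  constructor
  · rintro ⟨y, hy, rfl⟩
    have h := QuiverGrading.pr_mem_corner (G := (isUniversal_taut v).grading) n i j y
    rw [mul_assoc] at h
    have hy' : (isUniversal_taut v).grading.pr n y = y := (hmem y).mp hy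
    rw [hy'] at h
    exact h
  · intro hx
    refine ⟨x, (hmem x).mpr hx.1, ?_⟩
    exact (congrArg (_ * ·) hx.2.2).trans hx.2.1

end HeisenbergRep

section Hilbert

open PowerSeries HeisenbergRep

variable (k : Type) [Field k] (Q : FinQuiver) (v : Fin Q.r → k)

lemma smul_qhHilb_eq (P : ℤ → Fin Q.r → Fin Q.r → ℕ)
    (hP : ∀ (n : ℤ) i j, finrank k ((isUniversal_taut v).grading.corner n i j)
      = P n i j + finrank k ((isUniversal_taut v).grading.corner (n - 2) i j)) :
    (1 - X ^ 2 : PowerSeries k) • qhHilb k Q v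
      = Matrix.of fun i j => PowerSeries.mk fun n => (P n i j : k) := by
  have hcorner : ∀ n i j, finrank k (qhCorner k Q v n i j)
      = finrank k ((isUniversal_taut v).grading.corner n i j) := fun n i j => by
    rw [qhCorner_eq]
  ext i j n
  have h := congrArg (Nat.cast : ℕ → k) (hP n i j)
  rw [Nat.cast_add] at h
  simp only [Matrix.smul_apply, qhHilb, Matrix.of_apply, smul_eq_mul, sub_mul, one_mul, map_sub, coeff_mk,
    coeff_X_pow_mul']
  rw [hcorner, h]
  split_ifs with h2
  · rw [hcorner, Nat.cast_sub h2, Nat.cast_ofNat, add_sub_cancel_right]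
  · rw [QuiverGrading.corner_of_neg (by omega), finrank_bot]
    simp

lemma mul_of_recursion_eq_one (P : ℤ → Fin Q.r → Fin Q.r → ℕ)
    (hneg : ∀ n < 0, ∀ i j, P n i j = 0)
    (hP : ∀ (n : ℤ) i j, (P n i j : ℤ) = ∑ a : {a : Q.DArrow // dsrc a = i},
      (P (n - 1) (dtgt a.1) j : ℤ) - P (n - 2) i j + (if n = 0 ∧ i = j then 1 else 0)) :
    (1 - (X : PowerSeries k) • (Q.doubleAdj.map (Nat.cast : ℕ → PowerSeries k))
        + (X ^ 2 : PowerSeries k) • (1 : Matrix (Fin Q.r) (Fin Q.r) (PowerSeries k)))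
      * (Matrix.of fun i j => PowerSeries.mk fun n => (P n i j : k)) = 1 := by
  ext i j n
  have h := congrArg (Int.cast : ℤ → k) (hP n i j)
  rw [← sum_doubleAdj_mul i fun l => (P (n - 1) l j : ℤ)] at h
  push_cast at h
  rw [add_mul, sub_mul, one_mul, smul_mul_assoc, smul_mul_assoc, one_mul]
  simp only [Matrix.add_apply, Matrix.sub_apply, Matrix.smul_apply, Matrix.of_apply, smul_eq_mul,
    map_add, map_sub, coeff_mk, coeff_X_pow_mul', Matrix.mul_apply, Matrix.map_apply]
  rw [h]
  have h1 : coeff n ((1 : Matrix (Fin Q.r) (Fin Q.r) (PowerSeries k)) i j)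
      = if (n : ℤ) = 0 ∧ i = j then 1 else 0 := by
    rw [Matrix.one_apply]
    split_ifs <;> simp_all [coeff_one]
  have h2 : coeff n (X * ∑ l, (Q.doubleAdj i l : PowerSeries k)
      * PowerSeries.mk fun n => (P n l j : k)) = ∑ l, (Q.doubleAdj i l : k) * P (n - 1) l j := by
    cases n with
    | zero => simp [hneg]
    | succ n =>
      rw [coeff_succ_X_mul, map_sum]
      refine Finset.sum_congr rfl fun l _ => ?_
      rw [← map_natCast (PowerSeries.C (R := k)), coeff_C_mul, coeff_mk]
      simp
  have h3 : (if 2 ≤ n then (P ((n - 2 : ℕ) : ℤ) i j : k) else 0) = P (n - 2) i j := by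
    split_ifs with h
    · rw [Nat.cast_sub h]
      rfl
    · rw [hneg _ (by omega), Nat.cast_zero]
  rw [h1, h2, h3]
  ring

end Hilbert

end

/-- **Hilbert series of the quiver Heisenberg algebra, non-Dynkin case.**
For a connected finite acyclic non-Dynkin quiver `Q` and any `v ∈ k^{Q₀}`,
the graded pieces of `ᵛΛ(Q)` are finite dimensional and
`h_{ᵛΛ}(t)·(1 - C t + t²·1)·(1 - t²) = 1` in the ring of `r × r` matrices over
`k[[t]]`; equivalently `h_{ᵛΛ}(t) = 1/((1 - C t + t²)(1 - t²))`. -/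
theorem quiver_heisenberg_hilbert_series_non_dynkin
    (k : Type) [Field k] (Q : FinQuiver) (v : Fin Q.r → k) (hr : 0 < Q.r)
    (hconn : Q.Connected) (hacyc : Q.Acyclic) (hnd : ¬ Q.IsDynkin) :
    (∀ (n : ℕ) (i j : Fin Q.r), FiniteDimensional k (qhCorner k Q v n i j)) ∧
    qhHilb k Q v *
      (1 - (PowerSeries.X : PowerSeries k) • (Q.doubleAdj.map (Nat.cast : ℕ → PowerSeries k))
        + (PowerSeries.X ^ 2 : PowerSeries k) •
            (1 : Matrix (Fin Q.r) (Fin Q.r) (PowerSeries k))) *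
      ((1 - PowerSeries.X ^ 2 : PowerSeries k) •
            (1 : Matrix (Fin Q.r) (Fin Q.r) (PowerSeries k))) = 1 ∧
    ((1 - PowerSeries.X ^ 2 : PowerSeries k) •
            (1 : Matrix (Fin Q.r) (Fin Q.r) (PowerSeries k))) *
      (1 - (PowerSeries.X : PowerSeries k) • (Q.doubleAdj.map (Nat.cast : ℕ → PowerSeries k))
        + (PowerSeries.X ^ 2 : PowerSeries k) •
            (1 : Matrix (Fin Q.r) (Fin Q.r) (PowerSeries k))) *
      qhHilb k Q v = 1 := by
  have hR := HeisenbergRep.isUniversal_taut v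
  obtain ⟨B, _, _, q, hq⟩ := hR.exists_isCentralQuotient
  have h₁ := smul_qhHilb_eq k Q v _ (hR.finrank_corner_eq_add hq hconn hnd)
  have h₂ := mul_of_recursion_eq_one k Q
    (fun n i j => Module.finrank k ((hR.quotientGrading hq).corner n i j))
    (fun n hn i j => by rw [QuiverGrading.corner_of_neg hn, _root_.finrank_bot])
    ((hR.isPreprojective_quotientGrading hq).finrank_corner_eq hconn hnd)
  rw [← h₁] at h₂
  refine ⟨fun n i j => ?_, ?_, ?_⟩
  · rw [HeisenbergRep.qhCorner_eq]
    exact hR.finiteDimensional_corner n i j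
  · rw [mul_smul_comm, mul_one, ← smul_mul_assoc]
    exact mul_eq_one_comm.mp h₂
  · rwa [smul_mul_assoc, one_mul, smul_mul_assoc, ← mul_smul_comm]
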